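/- arXiv:1608.06703 — 2 statements merged into one kernel-verified Lean document; each statement's English description precedes it below -/
import Mathlib

section
/- Let k ≥ 1 and let G = ℤᵏ with the standard symmetric generating set S = {±e₁, …, ±e_k} of size 2k (the standard basis vectors and their negatives). Then the function R′ associated to (G, S) is asymptotically equivalent to the identity function, i.e., R′(n) ∼ n. -/
/-!
Let `d n` be the number of closed words of length `n` in `ℤᵐ`. By Fourier inversion
`(2π)ᵐ d n = ∫ fⁿ` over the cube `[-π, π]ᵐ`, where `f x = ∑ 2 cos (x i)`
(`integral_cosSum_pow`). Everything follows from the fact that the gap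
`4 m² d (2j) - d (2j+2) = (2π)⁻ᵐ ∫ (4 m² - f²) f^(2j)` has order exactly `d (2j) / (j + 1)`.

The comparison is with `|∇f|² = ∑ (2 sin (x i))²`. Since `Δf = -f`, integrating the divergence of
`f^(2j+1) ∇f` gives `(2j+1) ∫ |∇f|² f^(2j) = ∫ f^(2j+2)` exactly (`integral_sinSq_mul_pow`).

* By Cauchy–Schwarz, `m |∇f|² ≤ 4 m² - f²`, so the gap is at least `m d (2j+2) / (2j+1)`
  (`cogrowth_gap_lower`).
* Where `f² > 4 (m - 1)²` all the `cos (x i)` have the same sign and `4 m² - f² ≤ 2 m |∇f|²`; on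
  the rest of the cube `f^(2j)` is exponentially smaller than `d (2j)`. Hence the gap is at most
  `K d (2j) / (j + 1)` (`exists_cogrowth_gap_upper`).

Concentration near the maximum of `f` also shows that the growth rate is `D = 2m`
(`cogrowthRate_stdGen`). Thus `D² - d (2j+2) / d (2j)` is at most `K / (j + 1)`, so `R'(n) ≤ ⌈K n⌉`,
and it is at least `1 / (2j + 1)` as soon as the ratio is at least `1`, so `n ≤ 2 R'(n)`.
-/

/-- The cogrowth function of a group `G` with respect to a generating set `S`:
`cogrowth G S n` is the number of words of length `n` in the letters of `S`
whose product in `G` is the identity. -/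
noncomputable def cogrowth (G : Type*) [Group G] (S : Set G) (n : ℕ) : ℕ :=
  Nat.card {w : Fin n → S // (List.ofFn fun i => ((w i : G))).prod = 1}

/-- `D = limsup dₙ^{1/n}`, the asymptotic cogrowth rate. -/
noncomputable def cogrowthRate (G : Type*) [Group G] (S : Set G) : ℝ :=
  Filter.limsup (fun n : ℕ => (cogrowth G S n : ℝ) ^ ((n : ℝ)⁻¹)) Filter.atTop

/-- `R′(n) = min { k : d_{2k+2}/d_{2k} > D² − 1/n }`. -/
noncomputable def Rprime (G : Type*) [Group G] (S : Set G) (n : ℕ) : ℕ :=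
  sInf {k : ℕ |
    (cogrowth G S (2 * k + 2) : ℝ) / (cogrowth G S (2 * k) : ℝ) >
      (cogrowthRate G S) ^ 2 - 1 / (n : ℝ)}

/-- `f ≾ g`: there are constants `a, b > 0` with `f(n) ≤ a·g(⌈bn⌉)` for all
sufficiently large `n`. -/
def AsympLE (f g : ℕ → ℝ) : Prop :=
  ∃ a b : ℝ, 0 < a ∧ 0 < b ∧ ∀ᶠ n : ℕ in Filter.atTop, f n ≤ a * g ⌈b * (n : ℝ)⌉₊

/-- `f ∼ g`: `f ≾ g` and `g ≾ f`. -/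
def AsympEquiv (f g : ℕ → ℝ) : Prop :=
  AsympLE f g ∧ AsympLE g f

/-- The reduced-cogrowth function of a group presented as a quotient
`φ : FreeGroup X →* G`: the number of elements of the free group of reduced
word length `n` that map to the identity of `G`. -/
noncomputable def redCogrowth {X : Type*} [DecidableEq X] {G : Type*} [Group G]
    (φ : FreeGroup X →* G) (n : ℕ) : ℕ :=
  Nat.card {w : FreeGroup X // (FreeGroup.toWord w).length = n ∧ φ w = 1}

/-- `C = limsup cₙ^{1/n}`, the asymptotic reduced-cogrowth rate. -/
noncomputable def redCogrowthRate {X : Type*} [DecidableEq X] {G : Type*} [Group G]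
    (φ : FreeGroup X →* G) : ℝ :=
  Filter.limsup (fun n : ℕ => (redCogrowth φ n : ℝ) ^ ((n : ℝ)⁻¹)) Filter.atTop

/-- `R(n) = min { k : c_{2k+2}/c_{2k} > C² − 1/n }`. -/
noncomputable def RR {X : Type*} [DecidableEq X] {G : Type*} [Group G]
    (φ : FreeGroup X →* G) (n : ℕ) : ℕ :=
  sInf {k : ℕ |
    (redCogrowth φ (2 * k + 2) : ℝ) / (redCogrowth φ (2 * k) : ℝ) >
      (redCogrowthRate φ) ^ 2 - 1 / (n : ℝ)}

section ZkCogrowth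

open MeasureTheory Set Filter Topology
open Real (cos sin)
open scoped Real

/-! ### Fourier analysis on the dual torus -/

/-- The standard symmetric generating set `{±e₁, …, ±eₘ}` of `ℤᵐ`, written multiplicatively. -/
def stdGen (m : ℕ) : Set (Multiplicative (Fin m → ℤ)) :=
  {g | ∃ i : Fin m, g = Multiplicative.ofAdd (Pi.single i (1 : ℤ)) ∨
            g = Multiplicative.ofAdd (Pi.single i (-1 : ℤ))}

/-- The cube `[-π, π]ᵐ`, a fundamental domain of the torus dual to `ℤᵐ`. -/
def cube (m : ℕ) : Set (Fin m → ℝ) := Icc (fun _ => -π) (fun _ => π)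

/-- The Fourier transform of the indicator function of the generating set. -/
noncomputable def cosSum {m : ℕ} (x : Fin m → ℝ) : ℝ := ∑ i, 2 * cos (x i)

/-- The squared gradient of `cosSum`. -/
noncomputable def sinSq {m : ℕ} (x : Fin m → ℝ) : ℝ := ∑ i, (2 * sin (x i)) ^ 2

/-- The character of `ℤᵐ` attached to the point `x` of the dual torus. -/
noncomputable def torusChar {m : ℕ} (x : Fin m → ℝ) :
    Multiplicative (Fin m → ℤ) →* ℂ where
  toFun v := Complex.exp ((∑ i, ((v.toAdd i : ℤ) : ℂ) * (x i : ℂ)) * Complex.I)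
  map_one' := by simp
  map_mul' u v := by
    rw [← Complex.exp_add]
    congr 1
    simp [add_mul, Finset.sum_add_distrib]

/-- The signed basis vectors, indexed by a coordinate and a sign. -/
def signedBasis (m : ℕ) (p : Fin m × Bool) : Multiplicative (Fin m → ℤ) :=
  Multiplicative.ofAdd (Pi.single p.1 (if p.2 then 1 else -1))

lemma signedBasis_injective (m : ℕ) : Function.Injective (signedBasis m) := by
  rintro ⟨i, a⟩ ⟨j, b⟩ h
  have h' : (Pi.single i (if a then 1 else -1) : Fin m → ℤ)
      = Pi.single j (if b then 1 else -1) := Multiplicative.ofAdd.injective h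
  have hij : i = j := by
    by_contra hne
    have := congrFun h' i
    rw [Pi.single_eq_same, Pi.single_eq_of_ne hne] at this
    cases a <;> simp at this
  subst hij
  have := congrFun h' i
  rw [Pi.single_eq_same, Pi.single_eq_same] at this
  cases a <;> cases b <;> simp at this ⊢

lemma range_signedBasis (m : ℕ) : range (signedBasis m) = stdGen m := by
  ext g
  constructor
  · rintro ⟨⟨i, b⟩, rfl⟩
    cases b
    · exact ⟨i, Or.inr rfl⟩
    · exact ⟨i, Or.inl rfl⟩
  · rintro ⟨i, rfl | rfl⟩
    · exact ⟨(i, true), rfl⟩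
    · exact ⟨(i, false), rfl⟩

/-- The generators are enumerated by a coordinate and a sign. -/
noncomputable def genEquiv (m : ℕ) : Fin m × Bool ≃ stdGen m :=
  (Equiv.ofInjective _ (signedBasis_injective m)).trans (Equiv.setCongr (range_signedBasis m))

lemma genEquiv_apply (m : ℕ) (p : Fin m × Bool) :
    (genEquiv m p : Multiplicative (Fin m → ℤ)) = signedBasis m p := rfl

noncomputable instance (m : ℕ) : Fintype (stdGen m) := Fintype.ofEquiv _ (genEquiv m)

lemma card_stdGen (m : ℕ) : Fintype.card (stdGen m) = 2 * m := by
  rw [← Fintype.card_congr (genEquiv m)]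
  simp [mul_comm]

lemma sum_torusChar {m : ℕ} (x : Fin m → ℝ) :
    ∑ s : stdGen m, torusChar x s = (cosSum x : ℂ) := by
  rw [← (genEquiv m).sum_comp, Fintype.sum_prod_type]
  simp only [cosSum, Complex.ofReal_sum]
  refine Finset.sum_congr rfl fun i _ => ?_
  have h (c : ℤ) : ∑ j, (((Pi.single i c : Fin m → ℤ) j : ℤ) : ℂ) * (x j : ℂ) = c * x i := by
    rw [Finset.sum_eq_single i]
    · simp
    · intro j _ hj; simp [Pi.single_eq_of_ne hj]
    · simp
  simp only [Fintype.sum_bool, genEquiv_apply, signedBasis, torusChar, MonoidHom.coe_mk,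
    OneHom.coe_mk, toAdd_ofAdd, h]
  push_cast
  simp [Complex.cos]
  ring

lemma integral_exp_int (n : ℤ) :
    ∫ t in Icc (-π) π, Complex.exp ((n : ℂ) * (t : ℂ) * Complex.I)
      = if n = 0 then (2 * π : ℂ) else 0 := by
  have hpi : -π ≤ π := by linarith [Real.pi_pos]
  rw [integral_Icc_eq_integral_Ioc, ← intervalIntegral.integral_of_le hpi]
  split_ifs with hn
  · subst hn
    simp
    ring
  · have hc : (n : ℂ) * Complex.I ≠ 0 := by simp [hn]
    have := integral_exp_mul_complex (a := -π) (b := π) hc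
    simp_rw [mul_right_comm _ _ Complex.I]
    rw [this, div_eq_zero_iff]
    left
    rw [sub_eq_zero, Complex.exp_eq_exp_iff_exists_int]
    -- the two endpoints of the interval differ by `n` full periods
    exact ⟨n, by push_cast; ring⟩

lemma volume_restrict_cube (m : ℕ) :
    (volume : Measure (Fin m → ℝ)).restrict (cube m)
      = Measure.pi fun _ => (volume : Measure ℝ).restrict (Icc (-π) π) := by
  rw [cube, ← pi_univ_Icc, volume_pi, Measure.restrict_pi_pi]

lemma integral_torusChar {m : ℕ} (v : Multiplicative (Fin m → ℤ)) :
    ∫ x in cube m, torusChar x v = if v = 1 then ((2 * π : ℂ)) ^ m else 0 := by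
  have h (x : Fin m → ℝ) : torusChar x v
      = ∏ i, Complex.exp (((v.toAdd i : ℤ) : ℂ) * (x i : ℂ) * Complex.I) := by
    simp [torusChar, ← Complex.exp_sum, Finset.sum_mul]
  simp_rw [h]
  rw [volume_restrict_cube, integral_fintype_prod_eq_prod
    (f := fun i (t : ℝ) => Complex.exp (((v.toAdd i : ℤ) : ℂ) * (t : ℂ) * Complex.I))]
  simp_rw [integral_exp_int]
  split_ifs with hv
  · subst hv
    simp
  · obtain ⟨i, hi⟩ : ∃ i, v.toAdd i ≠ 0 := by
      by_contra! hcon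
      exact hv (Multiplicative.toAdd.injective (funext hcon))
    exact Finset.prod_eq_zero (Finset.mem_univ i) (by simp [hi])

lemma continuous_cosSum {m : ℕ} : Continuous (cosSum (m := m)) := by
  unfold cosSum; fun_prop

lemma continuous_sinSq {m : ℕ} : Continuous (sinSq (m := m)) := by
  unfold sinSq; fun_prop

lemma integrableOn_cube {m : ℕ} {E : Type*} [NormedAddCommGroup E] {f : (Fin m → ℝ) → E}
    (hf : Continuous f) : IntegrableOn f (cube m) :=
  hf.integrableOn_Icc

/-- Fourier inversion: the number of closed words is a moment of `cosSum`. -/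
lemma integral_cosSum_pow (m n : ℕ) :
    ∫ x in cube m, cosSum x ^ n = (2 * π) ^ m * cogrowth _ (stdGen m) n := by
  classical
  have key : ∫ x in cube m, ((cosSum x ^ n : ℝ) : ℂ)
      = (2 * π : ℂ) ^ m * cogrowth _ (stdGen m) n := by
    have hx (x : Fin m → ℝ) : ((cosSum x ^ n : ℝ) : ℂ)
        = ∑ w : Fin n → stdGen m,
          torusChar x (List.ofFn fun i => (w i : Multiplicative (Fin m → ℤ))).prod := by
      rw [Complex.ofReal_pow, ← sum_torusChar, Fintype.sum_pow]
      refine Finset.sum_congr rfl fun w _ => ?_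
      rw [List.prod_ofFn, map_prod]
    simp_rw [hx]
    rw [integral_finsetSum]
    · simp_rw [integral_torusChar]
      rw [← Finset.sum_filter, Finset.sum_const, nsmul_eq_mul, mul_comm, cogrowth,
        Nat.card_eq_fintype_card, Fintype.card_subtype]
    · intro w _
      refine integrableOn_cube ?_
      simp only [torusChar, MonoidHom.coe_mk, OneHom.coe_mk]
      fun_prop
  rw [integral_complex_ofReal] at key
  exact_mod_cast key

/-! ### Integration by parts and pointwise estimates -/

lemma hasFDerivAt_cosSum {m : ℕ} (x : Fin m → ℝ) :
    HasFDerivAt cosSum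
      (∑ i, (-(2 * sin (x i))) • ContinuousLinearMap.proj (R := ℝ) (φ := fun _ : Fin m => ℝ) i)
      x := by
  unfold cosSum
  refine HasFDerivAt.fun_sum fun i _ => ?_
  have h := ((hasFDerivAt_apply (𝕜 := ℝ) i x).cos).const_mul 2
  refine h.congr_fderiv ?_
  ext v
  simp [mul_assoc]

/-- Integration by parts: as `Δ cosSum = -cosSum`, the vector field
`cosSum ^ (2 * j + 1) • ∇ cosSum`, whose flux through each face of the cube vanishes, has
divergence `(2 * j + 1) * cosSum ^ (2 * j) * sinSq - cosSum ^ (2 * j + 2)`. -/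
lemma integral_sinSq_mul_pow (m j : ℕ) :
    (2 * j + 1 : ℝ) * ∫ x in cube (m + 1), sinSq x * cosSum x ^ (2 * j)
      = ∫ x in cube (m + 1), cosSum x ^ (2 * j + 2) := by
  set F : Fin (m + 1) → (Fin (m + 1) → ℝ) → ℝ :=
    fun i x => 2 * sin (x i) * cosSum x ^ (2 * j + 1) with hF
  set F' : Fin (m + 1) → (Fin (m + 1) → ℝ) → (Fin (m + 1) → ℝ) →L[ℝ] ℝ :=
    fun i x => (2 * sin (x i)) • (((2 * j + 1 : ℕ) * cosSum x ^ (2 * j)) •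
        ∑ i, (-(2 * sin (x i))) • ContinuousLinearMap.proj (R := ℝ) (φ := fun _ => ℝ) i)
      + cosSum x ^ (2 * j + 1) • ((2 * cos (x i)) • ContinuousLinearMap.proj i) with hF'
  have hdiv (x : Fin (m + 1) → ℝ) : ∑ i, F' i x (Pi.single i 1)
      = cosSum x ^ (2 * j + 2) - (2 * j + 1) * (sinSq x * cosSum x ^ (2 * j)) := by
    have h1 (i : Fin (m + 1)) : F' i x (Pi.single i 1)
        = cosSum x ^ (2 * j + 1) * (2 * cos (x i))
          - (2 * j + 1) * cosSum x ^ (2 * j) * (2 * sin (x i)) ^ 2 := by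
      have h2 : ∑ k, 2 * sin (x k) * (Pi.single i (1 : ℝ) : Fin (m + 1) → ℝ) k
          = 2 * sin (x i) := by
        rw [Finset.sum_eq_single i]
        · simp
        · intro k _ hk; simp [Pi.single_eq_of_ne hk]
        · simp
      simp [hF', h2]
      ring
    simp_rw [h1]
    rw [Finset.sum_sub_distrib, ← Finset.mul_sum (f := fun i => 2 * cos (x i)),
      ← Finset.mul_sum (f := fun i => (2 * sin (x i)) ^ 2)]
    change cosSum x ^ (2 * j + 1) * cosSum x - _ * sinSq x = _
    ring
  have hder (x : Fin (m + 1) → ℝ) (i : Fin (m + 1)) : HasFDerivAt (F i) (F' i x) x := by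
    have hs : HasFDerivAt (fun y : Fin (m + 1) → ℝ => 2 * sin (y i))
        ((2 * cos (x i)) • ContinuousLinearMap.proj (R := ℝ) (φ := fun _ => ℝ) i) x := by
      refine (((hasFDerivAt_apply (𝕜 := ℝ) i x).sin).const_mul 2).congr_fderiv ?_
      ext v
      simp [mul_assoc]
    have hp := (hasFDerivAt_cosSum x).pow (2 * j + 1)
    refine (hs.mul hp).congr_fderiv ?_
    ext v
    simp [hF']
  have hpow : Continuous fun x : Fin (m + 1) → ℝ => cosSum x ^ (2 * j + 2) :=
    continuous_cosSum.pow _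
  have hsin : Continuous fun x : Fin (m + 1) → ℝ =>
      (2 * j + 1 : ℝ) * (sinSq x * cosSum x ^ (2 * j)) :=
    continuous_const.mul (continuous_sinSq.mul (continuous_cosSum.pow _))
  have main := integral_divergence_of_hasFDerivAt_off_countable'
    (fun _ : Fin (m + 1) => -π) (fun _ => π) (fun _ => by linarith [Real.pi_pos]) F F' ∅
    countable_empty (fun i x _ => (hder x i).continuousAt.continuousWithinAt)
    (fun x _ i => hder x i)
    (by
      simp_rw [hdiv]
      exact integrableOn_cube (hpow.sub hsin))
  have hzero : ∫ x in cube (m + 1), (cosSum x ^ (2 * j + 2)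
      - (2 * j + 1) * (sinSq x * cosSum x ^ (2 * j))) = 0 := by
    simp_rw [hdiv] at main
    rw [cube, main]
    exact Finset.sum_eq_zero fun i _ => by simp [hF]
  rw [integral_sub (integrableOn_cube hpow) (integrableOn_cube hsin), integral_const_mul] at hzero
  linarith

/-- Near its extremal values, `4 m² - cosSum²` is controlled by the squared gradient. -/
lemma sq_sub_cosSum_sq_le_sinSq {m : ℕ} (x : Fin m → ℝ)
    (hx : 4 * ((m : ℝ) - 1) ^ 2 < cosSum x ^ 2) :
    4 * (m : ℝ) ^ 2 - cosSum x ^ 2 ≤ 2 * m * sinSq x := by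
  -- both signs of `cosSum` are treated at once by passing to `c i = ± cos (x i)`
  have aux (c : Fin m → ℝ) (hc : ∀ i, c i ≤ 1) (hs : (m : ℝ) - 1 < ∑ i, c i) :
      (m : ℝ) ^ 2 - (∑ i, c i) ^ 2 ≤ 2 * m * ∑ i, (1 - c i ^ 2) := by
    have hsum : (m : ℝ) - ∑ i, c i = ∑ i, (1 - c i) := by
      simp [Finset.sum_sub_distrib]
    have hpos (i : Fin m) : 0 < c i := by
      have : 1 - c i ≤ ∑ i, (1 - c i) :=
        Finset.single_le_sum (f := fun i => 1 - c i) (fun k _ => by linarith [hc k])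
          (Finset.mem_univ i)
      linarith
    have hle : (m : ℝ) - ∑ i, c i ≤ ∑ i, (1 - c i ^ 2) := by
      rw [hsum]
      exact Finset.sum_le_sum fun i _ => by nlinarith [hc i, hpos i]
    have h0 : 0 ≤ (m : ℝ) - ∑ i, c i := by
      rw [hsum]
      exact Finset.sum_nonneg fun i _ => by linarith [hc i]
    have h1 : 0 ≤ ∑ i, c i := Finset.sum_nonneg fun i _ => (hpos i).le
    nlinarith [mul_le_mul_of_nonneg_left hle (by linarith : 0 ≤ (m : ℝ) + ∑ i, c i)]
  have hcos : cosSum x = 2 * ∑ i, cos (x i) := by rw [cosSum, Finset.mul_sum]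
  have hsin : sinSq x = 4 * ∑ i, (1 - cos (x i) ^ 2) := by
    rw [sinSq, Finset.mul_sum]
    exact Finset.sum_congr rfl fun i _ => by rw [mul_pow, Real.sin_sq]; norm_num
  rw [hcos] at hx ⊢
  rw [hsin]
  have habs : (m : ℝ) - 1 < |∑ i, cos (x i)| := by
    refine lt_of_le_of_lt (le_abs_self _) (sq_lt_sq.1 ?_)
    linarith
  rcases lt_abs.1 habs with h | h
  · linarith [aux (fun i => cos (x i)) (fun i => Real.cos_le_one _) h]
  · have := aux (fun i => -cos (x i)) (fun i => by linarith [Real.neg_one_le_cos (x i)])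
      (by rwa [Finset.sum_neg_distrib])
    simp only [Finset.sum_neg_distrib, neg_sq] at this
    linarith

/-- The Cauchy–Schwarz bound on the squared gradient. -/
lemma sinSq_le_sq_sub_cosSum_sq {m : ℕ} (x : Fin m → ℝ) :
    m * sinSq x ≤ 4 * (m : ℝ) ^ 2 - cosSum x ^ 2 := by
  have hcs := sq_sum_le_card_mul_sum_sq (s := Finset.univ) (f := fun i => cos (x i))
  have hcos : cosSum x = 2 * ∑ i, cos (x i) := by rw [cosSum, Finset.mul_sum]
  have hsin : sinSq x = 4 * (m - ∑ i, cos (x i) ^ 2) := by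
    have : (m : ℝ) - ∑ i, cos (x i) ^ 2 = ∑ i, (1 - cos (x i) ^ 2) := by
      simp [Finset.sum_sub_distrib]
    rw [this, sinSq, Finset.mul_sum]
    exact Finset.sum_congr rfl fun i _ => by rw [mul_pow, Real.sin_sq]; norm_num
  rw [Finset.card_univ, Fintype.card_fin] at hcs
  rw [hcos, hsin]
  linarith

lemma abs_cosSum_le {m : ℕ} (x : Fin m → ℝ) : |cosSum x| ≤ 2 * m := by
  unfold cosSum
  refine (Finset.abs_sum_le_sum_abs _ _).trans ?_
  refine (Finset.sum_le_sum (g := fun _ => (2 : ℝ)) fun i _ => ?_).trans (by simp [mul_comm])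
  rw [abs_mul, abs_two]
  linarith [Real.abs_cos_le_one (x i)]

/-! ### Consequences for the cogrowth function -/

/-- Lower bound for the gap in the ratio, from Cauchy–Schwarz and integration by parts. -/
lemma cogrowth_gap_lower {m : ℕ} (hm : 1 ≤ m) (j : ℕ) :
    (m : ℝ) * cogrowth _ (stdGen m) (2 * j + 2) ≤ (2 * j + 1) *
      (4 * (m : ℝ) ^ 2 * cogrowth _ (stdGen m) (2 * j) - cogrowth _ (stdGen m) (2 * j + 2)) := by
  obtain ⟨m, rfl⟩ := Nat.exists_eq_add_of_le' hm
  have hV : (0 : ℝ) < (2 * π) ^ (m + 1) := by positivity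
  have hf (n : ℕ) : Continuous fun x : Fin (m + 1) → ℝ => cosSum x ^ n := continuous_cosSum.pow n
  have hs : Continuous fun x : Fin (m + 1) → ℝ => sinSq x * cosSum x ^ (2 * j) :=
    continuous_sinSq.mul (hf _)
  have hcf (c : ℝ) (n : ℕ) : Continuous fun x : Fin (m + 1) → ℝ => c * cosSum x ^ n :=
    continuous_const.mul (hf n)
  have hcs (c : ℝ) : Continuous fun x : Fin (m + 1) → ℝ => c * (sinSq x * cosSum x ^ (2 * j)) :=
    continuous_const.mul hs
  have hmono : ∫ x in cube (m + 1), ((m + 1 : ℕ) : ℝ) * (sinSq x * cosSum x ^ (2 * j))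
      ≤ ∫ x in cube (m + 1), (4 * ((m + 1 : ℕ) : ℝ) ^ 2 * cosSum x ^ (2 * j)
          - cosSum x ^ (2 * j + 2)) := by
    refine integral_mono (integrableOn_cube (hcs _))
      (integrableOn_cube ((hcf _ _).sub (hf _))) fun x => ?_
    have h := mul_le_mul_of_nonneg_right (sinSq_le_sq_sub_cosSum_sq x)
      (Even.pow_nonneg (even_two_mul j) (cosSum x))
    calc _ = ((m + 1 : ℕ) : ℝ) * sinSq x * cosSum x ^ (2 * j) := by ring
      _ ≤ _ := h
      _ = _ := by ring
  rw [integral_const_mul, integral_sub (integrableOn_cube (hcf _ _))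
    (integrableOn_cube (hf _)), integral_const_mul, integral_cosSum_pow, integral_cosSum_pow]
    at hmono
  have hparts := integral_sinSq_mul_pow m j
  rw [integral_cosSum_pow] at hparts
  refine le_of_mul_le_mul_left ?_ hV
  have h2 := mul_le_mul_of_nonneg_left hmono (by positivity : (0 : ℝ) ≤ 2 * j + 1)
  calc _ = ((m + 1 : ℕ) : ℝ) * ((2 * π) ^ (m + 1)
          * cogrowth _ (stdGen (m + 1)) (2 * j + 2)) := by ring
    _ = (2 * j + 1) * (((m + 1 : ℕ) : ℝ)
          * ∫ x in cube (m + 1), sinSq x * cosSum x ^ (2 * j)) := by rw [← hparts]; ring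
    _ ≤ _ := h2
    _ = _ := by ring

/-- Upper bound for the gap: the points with `cosSum² ≤ 4 (m - 1)²`, where the squared gradient
gives no control, contribute the exponential term. -/
lemma cogrowth_gap_upper_aux {m : ℕ} (hm : 1 ≤ m) (j : ℕ) :
    4 * (m : ℝ) ^ 2 * cogrowth _ (stdGen m) (2 * j) - cogrowth _ (stdGen m) (2 * j + 2)
      ≤ 2 * m * (cogrowth _ (stdGen m) (2 * j + 2) / (2 * j + 1))
        + 4 * (m : ℝ) ^ 2 * (4 * ((m : ℝ) - 1) ^ 2) ^ j := by
  obtain ⟨m, rfl⟩ := Nat.exists_eq_add_of_le' hm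
  have hV : (0 : ℝ) < (2 * π) ^ (m + 1) := by positivity
  have hf (n : ℕ) : Continuous fun x : Fin (m + 1) → ℝ => cosSum x ^ n := continuous_cosSum.pow n
  have hs : Continuous fun x : Fin (m + 1) → ℝ => sinSq x * cosSum x ^ (2 * j) :=
    continuous_sinSq.mul (hf _)
  have hcf (c : ℝ) (n : ℕ) : Continuous fun x : Fin (m + 1) → ℝ => c * cosSum x ^ n :=
    continuous_const.mul (hf n)
  have hcs (c : ℝ) : Continuous fun x : Fin (m + 1) → ℝ => c * (sinSq x * cosSum x ^ (2 * j)) :=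
    continuous_const.mul hs
  set M : ℝ := ((m + 1 : ℕ) : ℝ) with hM
  have hmono : ∫ x in cube (m + 1), (4 * M ^ 2 * cosSum x ^ (2 * j) - cosSum x ^ (2 * j + 2))
      ≤ ∫ x in cube (m + 1), (2 * M * (sinSq x * cosSum x ^ (2 * j))
          + 4 * M ^ 2 * (4 * (M - 1) ^ 2) ^ j) := by
    refine integral_mono (integrableOn_cube ((hcf _ _).sub (hf _)))
      (integrableOn_cube ((hcs _).add continuous_const)) fun x => ?_
    have hnn : 0 ≤ cosSum x ^ (2 * j) := Even.pow_nonneg (even_two_mul j) _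
    have hS : 0 ≤ sinSq x := Finset.sum_nonneg fun i _ => sq_nonneg _
    have hM0 : 0 ≤ M := Nat.cast_nonneg _
    have hrw : 4 * M ^ 2 * cosSum x ^ (2 * j) - cosSum x ^ (2 * j + 2)
        = (4 * M ^ 2 - cosSum x ^ 2) * cosSum x ^ (2 * j) := by ring
    change 4 * M ^ 2 * cosSum x ^ (2 * j) - cosSum x ^ (2 * j + 2) ≤ _
    rw [hrw]
    rcases lt_or_ge (4 * (M - 1) ^ 2) (cosSum x ^ 2) with h | h
    · have h1 := mul_le_mul_of_nonneg_right (sq_sub_cosSum_sq_le_sinSq x h) hnn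
      have h2 : 0 ≤ 4 * M ^ 2 * (4 * (M - 1) ^ 2) ^ j := by positivity
      change _ ≤ 2 * M * (sinSq x * cosSum x ^ (2 * j)) + _
      linarith
    · have h1 : cosSum x ^ (2 * j) ≤ (4 * (M - 1) ^ 2) ^ j := by
        rw [pow_mul]
        exact pow_le_pow_left₀ (sq_nonneg _) h j
      have h2 : (4 * M ^ 2 - cosSum x ^ 2) * cosSum x ^ (2 * j)
          ≤ 4 * M ^ 2 * (4 * (M - 1) ^ 2) ^ j := by
        refine mul_le_mul ?_ h1 hnn (by positivity)
        linarith [sq_nonneg (cosSum x)]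
      have h3 : 0 ≤ 2 * M * (sinSq x * cosSum x ^ (2 * j)) := by positivity
      change _ ≤ 2 * M * (sinSq x * cosSum x ^ (2 * j)) + _
      linarith
  have hvol : ∫ _ in cube (m + 1), (4 * M ^ 2 * (4 * (M - 1) ^ 2) ^ j)
      = (2 * π) ^ (m + 1) * (4 * M ^ 2 * (4 * (M - 1) ^ 2) ^ j) := by
    rw [setIntegral_const, smul_eq_mul, cube, measureReal_def, Real.volume_Icc_pi_toReal]
    · simp; left; ring
    · intro i; linarith [Real.pi_pos]
  rw [integral_sub (integrableOn_cube (hcf _ _))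
    (integrableOn_cube (hf _)), integral_const_mul, integral_cosSum_pow, integral_cosSum_pow,
    integral_add (integrableOn_cube (hcs _))
      (integrableOn_cube continuous_const), integral_const_mul, hvol] at hmono
  have hparts : ∫ x in cube (m + 1), sinSq x * cosSum x ^ (2 * j)
      = (2 * π) ^ (m + 1) * (cogrowth _ (stdGen (m + 1)) (2 * j + 2) / (2 * j + 1)) := by
    rw [← mul_div_assoc, ← integral_cosSum_pow, ← integral_sinSq_mul_pow]
    field_simp
  rw [hparts] at hmono
  refine le_of_mul_le_mul_left ?_ hV
  linarith

/-- Concentration near the maximum of `cosSum`: the even moments grow faster than any geometric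
sequence of ratio less than `(2 m)²`. -/
lemma exists_le_cogrowth (m : ℕ) {q : ℝ} (hq0 : 0 ≤ q) (hq : q < 2 * m) :
    ∃ c : ℝ, 0 < c ∧ ∀ j : ℕ, c * q ^ (2 * j) ≤ cogrowth _ (stdGen m) (2 * j) := by
  have hV : (0 : ℝ) < (2 * π) ^ m := by positivity
  set U : Set (Fin m → ℝ) := interior (cube m) ∩ {x | q < cosSum x} with hU
  have hUo : IsOpen U := isOpen_interior.inter (isOpen_lt continuous_const continuous_cosSum)
  have h0 : (0 : Fin m → ℝ) ∈ U := by
    refine ⟨?_, by simpa [cosSum, mul_comm] using hq⟩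
    rw [cube, mem_interior_iff_mem_nhds]
    rw [← pi_univ_Icc]
    exact set_pi_mem_nhds finite_univ fun i _ =>
      Icc_mem_nhds (by simp [Real.pi_pos]) (by simp [Real.pi_pos])
  have hUc : U ⊆ cube m := inter_subset_left.trans interior_subset
  have hfin : volume U ≠ ⊤ :=
    ((measure_mono hUc).trans_lt isCompact_Icc.measure_lt_top).ne
  have hpos : 0 < (volume : Measure (Fin m → ℝ)).real U :=
    ENNReal.toReal_pos (hUo.measure_pos volume ⟨0, h0⟩).ne' hfin
  refine ⟨volume.real U / (2 * π) ^ m, by positivity, fun j => ?_⟩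
  have hint := integrableOn_cube (continuous_cosSum (m := m).pow (2 * j))
  have h1 : ∫ _ in U, q ^ (2 * j) ≤ ∫ x in U, cosSum x ^ (2 * j) :=
    setIntegral_mono_on (integrableOn_const hfin) (hint.mono_set hUc) hUo.measurableSet
      fun x hx => pow_le_pow_left₀ hq0 (le_of_lt hx.2) _
  have h2 : ∫ x in U, cosSum x ^ (2 * j) ≤ ∫ x in cube m, cosSum x ^ (2 * j) :=
    setIntegral_mono_set hint
      (Filter.Eventually.of_forall fun x => Even.pow_nonneg (even_two_mul j) _)
      (LE.le.eventuallyLE hUc)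
  rw [setIntegral_const, smul_eq_mul] at h1
  rw [integral_cosSum_pow] at h2
  rw [div_mul_eq_mul_div, div_le_iff₀ hV]
  linarith

lemma cogrowth_le (m n : ℕ) : (cogrowth _ (stdGen m) n : ℝ) ≤ (2 * m) ^ n := by
  have : cogrowth _ (stdGen m) n ≤ (2 * m) ^ n := by
    refine (Nat.card_le_card_of_injective _ Subtype.val_injective).trans ?_
    rw [Nat.card_eq_fintype_card, Fintype.card_fun, card_stdGen, Fintype.card_fin]
  exact_mod_cast this

lemma cogrowthRate_stdGen {m : ℕ} (hm : 1 ≤ m) : cogrowthRate _ (stdGen m) = 2 * m := by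
  have hm' : (1 : ℝ) ≤ m := by exact_mod_cast hm
  set u : ℕ → ℝ := fun n => (cogrowth _ (stdGen m) n : ℝ) ^ ((n : ℝ)⁻¹) with hu
  have hle : ∀ᶠ n in atTop, u n ≤ 2 * m := by
    filter_upwards [eventually_ne_atTop 0] with n hn
    calc u n ≤ ((2 * m : ℝ) ^ n) ^ ((n : ℝ)⁻¹) :=
          Real.rpow_le_rpow (Nat.cast_nonneg _) (cogrowth_le m n) (by positivity)
      _ = 2 * m := Real.pow_rpow_inv_natCast (by positivity) hn
  have hu0 (n : ℕ) : 0 ≤ u n := Real.rpow_nonneg (Nat.cast_nonneg _) _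
  refine le_antisymm (limsup_le_of_le
    (isCoboundedUnder_le_of_le atTop (x := 0) hu0) hle) ?_
  refine le_of_forall_lt_imp_le_of_dense fun q hq => ?_
  refine le_limsup_of_frequently_le ?_ ⟨2 * m, hle⟩
  -- compare with a geometric sequence of ratio `p ^ 2`, where `max q 1 < p < 2 * m`
  obtain ⟨p, hp1, hp2⟩ := exists_between (max_lt hq (by linarith : (1 : ℝ) < 2 * m))
  have hp0 : 0 < p := by linarith [le_max_right q 1]
  obtain ⟨c, hc, hcj⟩ := exists_le_cogrowth m hp0.le hp2
  have hlim : Tendsto (fun n : ℕ => c ^ ((n : ℝ)⁻¹) * p) atTop (𝓝 (1 * p)) := by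
    refine Tendsto.mul_const p ?_
    have := (tendsto_const_nhds (x := c)).rpow
      (tendsto_inv_atTop_zero.comp tendsto_natCast_atTop_atTop) (Or.inl hc.ne')
    simpa using this
  have hev := hlim.eventually_const_lt (u := q) (by linarith [le_max_left q 1])
  have hdbl : Tendsto (fun j : ℕ => 2 * j) atTop atTop :=
    tendsto_id.const_mul_atTop' (by norm_num)
  -- only even lengths have closed words
  refine hdbl.frequently (Eventually.frequently ?_)
  filter_upwards [hdbl.eventually hev, eventually_ne_atTop 0] with j hj hj0
  refine hj.le.trans ?_
  calc c ^ (((2 * j : ℕ) : ℝ)⁻¹) * p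
      = c ^ (((2 * j : ℕ) : ℝ)⁻¹) * (p ^ (2 * j)) ^ (((2 * j : ℕ) : ℝ)⁻¹) := by
        rw [Real.pow_rpow_inv_natCast hp0.le (by omega)]
    _ = (c * p ^ (2 * j)) ^ (((2 * j : ℕ) : ℝ)⁻¹) := by
        rw [Real.mul_rpow hc.le (by positivity)]
    _ ≤ u (2 * j) := Real.rpow_le_rpow (by positivity) (hcj j) (by positivity)

/-- A geometric sequence dominates a smaller one even after multiplication by the index. -/
lemma succ_mul_pow_le {b p : ℝ} (hb : 0 ≤ b) (hp : b + 1 ≤ p) (j : ℕ) :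
    (j + 1 : ℝ) * b ^ j ≤ p ^ (j + 1) := by
  induction j with
  | zero => simp; linarith
  | succ j ih =>
    have hbp : b ^ (j + 1) ≤ p ^ (j + 1) := pow_le_pow_left₀ hb (by linarith) _
    have h0 : 0 ≤ p ^ (j + 1) := by have : 0 ≤ p := by linarith
                                    positivity
    push_cast
    calc (j + 1 + 1 : ℝ) * b ^ (j + 1) = b * ((j + 1) * b ^ j) + b ^ (j + 1) := by ring
      _ ≤ b * p ^ (j + 1) + p ^ (j + 1) := add_le_add (mul_le_mul_of_nonneg_left ih hb) hbp
      _ = (b + 1) * p ^ (j + 1) := by ring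
      _ ≤ p * p ^ (j + 1) := mul_le_mul_of_nonneg_right hp h0
      _ = p ^ (j + 1 + 1) := by ring

lemma cogrowth_pos {m : ℕ} (hm : 1 ≤ m) (j : ℕ) :
    (0 : ℝ) < cogrowth _ (stdGen m) (2 * j) := by
  have hm' : (1 : ℝ) ≤ m := by exact_mod_cast hm
  obtain ⟨c, hc, h⟩ := exists_le_cogrowth m zero_le_one (by linarith)
  exact lt_of_lt_of_le (by positivity) (h j)

/-- Upper bound for the gap, with the exponential term absorbed by the growth of the even
moments. -/
lemma exists_cogrowth_gap_upper {m : ℕ} (hm : 1 ≤ m) : ∃ K : ℝ, 0 < K ∧ ∀ j : ℕ,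
    4 * (m : ℝ) ^ 2 * cogrowth _ (stdGen m) (2 * j) - cogrowth _ (stdGen m) (2 * j + 2)
      ≤ K * cogrowth _ (stdGen m) (2 * j) / (j + 1) := by
  have hm' : (1 : ℝ) ≤ m := by exact_mod_cast hm
  -- `2 * m - 1` lies strictly between `2 * (m - 1)` and the growth rate `2 * m`
  obtain ⟨c, hc, hcj⟩ := exists_le_cogrowth m (q := 2 * m - 1) (by linarith) (by linarith)
  refine ⟨8 * m ^ 3 + 4 * m ^ 2 * ((2 * m - 1) ^ 2 / c), by positivity, fun j => ?_⟩
  have hlow := cogrowth_gap_lower hm j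
  have hup := cogrowth_gap_upper_aux hm j
  have hcj := hcj j
  set d : ℝ := (cogrowth _ (stdGen m) (2 * j) : ℝ)
  set d' : ℝ := (cogrowth _ (stdGen m) (2 * j + 2) : ℝ)
  have hd' : 0 ≤ d' := Nat.cast_nonneg _
  have hj : (0 : ℝ) < j + 1 := by positivity
  have hdd : d' ≤ 4 * m ^ 2 * d := by
    have h1 : 0 ≤ 4 * (m : ℝ) ^ 2 * d - d' := by
      refine nonneg_of_mul_nonneg_right (a := (2 * j + 1 : ℝ)) ?_ (by positivity)
      exact le_trans (by positivity) hlow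
    linarith
  have h1 : d' / (2 * j + 1) ≤ 4 * m ^ 2 * d / (j + 1) :=
    div_le_div₀ (hd'.trans hdd) hdd hj (by linarith [(Nat.cast_nonneg j : (0 : ℝ) ≤ j)])
  have h2 : (4 * ((m : ℝ) - 1) ^ 2) ^ j ≤ (2 * m - 1) ^ 2 / c * d / (j + 1) := by
    rw [le_div_iff₀ hj]
    have h3 := succ_mul_pow_le (b := 4 * ((m : ℝ) - 1) ^ 2) (p := (2 * m - 1) ^ 2)
      (by positivity) (by nlinarith) j
    have h4 : (2 * m - 1 : ℝ) ^ (2 * j) ≤ d / c := by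
      rw [le_div_iff₀ hc]; linarith
    calc _ = (j + 1 : ℝ) * (4 * ((m : ℝ) - 1) ^ 2) ^ j := by ring
      _ ≤ _ := h3
      _ = (2 * m - 1 : ℝ) ^ 2 * (2 * m - 1 : ℝ) ^ (2 * j) := by rw [pow_succ, ← pow_mul]; ring
      _ ≤ (2 * m - 1 : ℝ) ^ 2 * (d / c) := mul_le_mul_of_nonneg_left h4 (sq_nonneg _)
      _ = _ := by ring
  calc _ ≤ _ := hup
    _ ≤ 2 * m * (4 * m ^ 2 * d / (j + 1))
        + 4 * (m : ℝ) ^ 2 * ((2 * m - 1) ^ 2 / c * d / (j + 1)) := by gcongr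
    _ = _ := by ring

end ZkCogrowth

/-- For `ℤᵏ` (`k ≥ 1`) with the standard symmetric generating set
`S = {±e₁, …, ±e_k}`, the function `R′` satisfies `R′(n) ∼ n`. -/
theorem Rprime_Zk_asymp (k : ℕ) (hk : 1 ≤ k) :
    AsympEquiv
      (fun n : ℕ =>
        (Rprime (Multiplicative (Fin k → ℤ))
          {g : Multiplicative (Fin k → ℤ) | ∃ i : Fin k,
            g = Multiplicative.ofAdd (Pi.single i (1 : ℤ)) ∨
            g = Multiplicative.ofAdd (Pi.single i (-1 : ℤ))} n : ℝ))
      (fun n : ℕ => (n : ℝ)) := by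
  change AsympEquiv (fun n : ℕ => (Rprime _ (stdGen k) n : ℝ)) (fun n : ℕ => (n : ℝ))
  have hk' : (1 : ℝ) ≤ k := by exact_mod_cast hk
  obtain ⟨K, hK, hgap⟩ := exists_cogrowth_gap_upper hk
  set r : ℕ → ℝ := fun j =>
    (cogrowth _ (stdGen k) (2 * j + 2) : ℝ) / cogrowth _ (stdGen k) (2 * j) with hr
  have hR (n : ℕ) : Rprime _ (stdGen k) n
      = sInf {j : ℕ | r j > 4 * (k : ℝ) ^ 2 - 1 / (n : ℝ)} := by
    rw [Rprime, cogrowthRate_stdGen hk, show (2 * k : ℝ) ^ 2 = 4 * (k : ℝ) ^ 2 by ring]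
  have hupper (j : ℕ) : 4 * (k : ℝ) ^ 2 - K / (j + 1) ≤ r j := by
    have hd := cogrowth_pos hk j
    rw [hr, le_div_iff₀ hd]
    have := hgap j
    rw [mul_div_right_comm] at this
    linarith
  have hlower (j : ℕ) : k * r j ≤ (2 * j + 1) * (4 * (k : ℝ) ^ 2 - r j) := by
    have hd := cogrowth_pos hk j
    have := cogrowth_gap_lower hk j
    have he : (cogrowth _ (stdGen k) (2 * j + 2) : ℝ) = r j * cogrowth _ (stdGen k) (2 * j) := by
      rw [hr]; field_simp
    rw [he] at this
    refine le_of_mul_le_mul_right ?_ hd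
    linarith
  have hmem (n : ℕ) (hn : 1 ≤ n) :
      ⌈K * (n : ℝ)⌉₊ ∈ {j : ℕ | r j > 4 * (k : ℝ) ^ 2 - 1 / (n : ℝ)} := by
    have hn' : (0 : ℝ) < n := by exact_mod_cast hn
    have h1 : K / ((⌈K * (n : ℝ)⌉₊ : ℝ) + 1) < 1 / n := by
      rw [div_lt_div_iff₀ (by positivity) hn']
      linarith [Nat.le_ceil (K * (n : ℝ))]
    have := hupper ⌈K * (n : ℝ)⌉₊
    change 4 * (k : ℝ) ^ 2 - 1 / (n : ℝ) < r _
    linarith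
  refine ⟨⟨1, K, one_pos, hK, ?_⟩, ⟨2, 1, two_pos, one_pos, ?_⟩⟩
  · filter_upwards [Filter.eventually_ge_atTop 1] with n hn
    rw [one_mul, hR]
    exact_mod_cast Nat.sInf_le (hmem n hn)
  · filter_upwards [Filter.eventually_ge_atTop 1] with n hn
    rw [one_mul, Nat.ceil_natCast, hR]
    have hn' : (1 : ℝ) ≤ n := by exact_mod_cast hn
    -- nonemptiness matters: the infimum of the empty set would be the junk value `0`
    have hin := Nat.sInf_mem ⟨_, hmem n hn⟩
    set j := sInf {j : ℕ | r j > 4 * (k : ℝ) ^ 2 - 1 / (n : ℝ)}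
    have hj : 4 * (k : ℝ) ^ 2 - 1 / (n : ℝ) < r j := hin
    have hinv : 1 / (n : ℝ) ≤ 1 := by rw [div_le_one (by linarith)]; exact hn'
    have hr1 : 1 ≤ r j := by nlinarith
    have h1 : (1 : ℝ) < (2 * j + 1) * (1 / n) := by
      calc (1 : ℝ) ≤ k * r j := by nlinarith
        _ ≤ _ := hlower j
        _ < _ := mul_lt_mul_of_pos_left (by linarith) (by positivity)
    rw [mul_one_div, lt_div_iff₀ (by linarith), one_mul] at h1
    have h2 : n < 2 * j + 1 := by exact_mod_cast h1
    exact_mod_cast Nat.lt_succ_iff.1 h2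
end

section
/- For each integer N ≥ 2, let G = BS(1,N) be the Baumslag–Solitar group given by the presentation ⟨a, t ∣ t a t⁻¹ a⁻ᴺ⟩ (the quotient of the free group on {a, t} by the normal closure of the relator tat⁻¹a⁻ᴺ), with symmetric generating set S = {a, a⁻¹, t, t⁻¹}. Then the function R′ associated to (G, S) satisfies R′(n) ∼ n^{3/2}. -/
/-- The relator set of the Baumslag–Solitar presentation `⟨a, t ∣ tat⁻¹a⁻ᴺ⟩`,
with `a` the free generator `0` and `t` the free generator `1`. -/
def BSrels (N : ℕ) : Set (FreeGroup (Fin 2)) :=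
  {FreeGroup.of 1 * FreeGroup.of 0 * (FreeGroup.of 1)⁻¹ * (FreeGroup.of 0 ^ N)⁻¹}


open Finset

/-! ### Return counts of a symmetric walk and their decay -/

noncomputable section Walk

variable {G : Type*} [Group G]

open Classical in
/-- `walkCount T n g` is the number of words `w` of length `n` over the finite set `T` with
`g * w = 1`, as a real number.  When `T = T⁻¹` it is also the number of words with product `g`. -/
def walkCount (T : Finset G) : ℕ → G → ℝ
  | 0, g => if g = 1 then 1 else 0
  | n + 1, g => ∑ s ∈ T, walkCount T n (g * s)

lemma walkCount_nonneg (T : Finset G) (n : ℕ) (g : G) : 0 ≤ walkCount T n g := by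
  induction n generalizing g with
  | zero => unfold walkCount; split_ifs <;> norm_num
  | succ n ih => exact Finset.sum_nonneg fun s _ => ih _

lemma finite_support_shift {f : G → ℝ} (hf : f.support.Finite) (y : G) :
    (fun x => f (x * y)).support.Finite :=
  hf.preimage (f := fun x => x * y) (mul_left_injective y).injOn

lemma walkCount_finite_support (T : Finset G) (n : ℕ) : (walkCount T n).support.Finite := by
  induction n with
  | zero =>
    refine (Set.finite_singleton (1 : G)).subset fun g hg => ?_
    by_contra h
    exact hg (if_neg h)
  | succ n ih =>
    refine (T.finite_toSet.biUnion fun s _ => finite_support_shift ih s).subset fun g hg => ?_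
    obtain ⟨s, hs, h⟩ := Finset.exists_ne_zero_of_sum_ne_zero hg
    exact Set.mem_biUnion hs h

lemma summable_of_finite {α : Type*} {f : α → ℝ} (hf : f.support.Finite) : Summable f :=
  summable_of_hasFiniteSupport hf

lemma summable_mul_of_finite {G : Type*} {f g : G → ℝ} (hf : f.support.Finite) :
    Summable fun x => f x * g x :=
  summable_of_finite (hf.subset (Function.support_mul_subset_left f g))

lemma tsum_shift (F : G → ℝ) (y : G) : ∑' x, F (x * y) = ∑' x, F x :=
  (Equiv.mulRight y).tsum_eq F

lemma sum_inv_eq {T : Finset G} (hT : ∀ s ∈ T, s⁻¹ ∈ T) (F : G → ℝ) :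
    ∑ s ∈ T, F s⁻¹ = ∑ s ∈ T, F s :=
  Finset.sum_nbij' (·⁻¹) (·⁻¹) hT hT (by simp) (by simp) (by simp)

/-- Convolution by `T` moves from `f` onto the weight `w`, with inverted steps. -/
lemma tsum_sum_shift_mul (T : Finset G) {f : G → ℝ} (hf : f.support.Finite) (w : G → ℝ) :
    ∑' x, (∑ s ∈ T, f (x * s)) * w x = ∑' x, f x * ∑ s ∈ T, w (x * s⁻¹) := by
  simp_rw [Finset.sum_mul, Finset.mul_sum]
  rw [Summable.tsum_finsetSum fun s _ => summable_mul_of_finite (finite_support_shift hf s),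
    Summable.tsum_finsetSum fun s _ => summable_mul_of_finite hf]
  refine Finset.sum_congr rfl fun s _ => ?_
  rw [← tsum_shift (fun x => f x * w (x * s⁻¹)) s]
  simp

lemma walkCount_tsum (T : Finset G) (n : ℕ) : ∑' x, walkCount T n x = (#T : ℝ) ^ n := by
  induction n with
  | zero => simp [walkCount]
  | succ n ih =>
    have := tsum_sum_shift_mul T (walkCount_finite_support T n) (fun _ => 1)
    simp only [mul_one, Finset.sum_const, nsmul_eq_mul] at this
    simp only [walkCount]
    rw [this, tsum_mul_right, ih, pow_succ]

/-- Self-adjointness of the convolution operator of a symmetric set. -/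
lemma walkCount_inner {T : Finset G} (hT : ∀ s ∈ T, s⁻¹ ∈ T) (m n : ℕ) :
    ∑' x, walkCount T m x * walkCount T n x = walkCount T (m + n) 1 := by
  induction m generalizing n with
  | zero =>
    rw [tsum_eq_single 1]
    · simp [walkCount]
    · intro b hb; simp [walkCount, hb]
  | succ m ih =>
    simp only [walkCount]
    rw [tsum_sum_shift_mul T (walkCount_finite_support T m), show m + 1 + n = m + (n + 1) by ring,
      ← ih (n + 1)]
    refine tsum_congr fun x => ?_
    rw [sum_inv_eq hT (fun s => walkCount T n (x * s))]
    rfl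

lemma tsum_mul_sq_le {G : Type*} {f g : G → ℝ} (hf : f.support.Finite) (hg : g.support.Finite) :
    (∑' x, f x * g x) ^ 2 ≤ (∑' x, f x ^ 2) * ∑' x, g x ^ 2 := by
  classical
  set s := hf.toFinset ∪ hg.toFinset
  have hf' : ∀ x ∉ s, f x = 0 := fun x hx => by
    by_contra h; exact hx (by simp [s, h])
  have hg' : ∀ x ∉ s, g x = 0 := fun x hx => by
    by_contra h; exact hx (by simp [s, h])
  rw [tsum_eq_sum (s := s) fun x hx => by simp [hf' x hx],
    tsum_eq_sum (s := s) fun x hx => by simp [hf' x hx],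
    tsum_eq_sum (s := s) fun x hx => by simp [hg' x hx]]
  exact Finset.sum_mul_sq_le_sq_mul_sq s f g

lemma walkCount_sq {T : Finset G} (hT : ∀ s ∈ T, s⁻¹ ∈ T) (n : ℕ) :
    ∑' x, walkCount T n x ^ 2 = walkCount T (2 * n) 1 := by
  rw [two_mul, ← walkCount_inner hT]; simp only [sq]

/-- Even return counts are moments of a positive measure, hence log-convex. -/
lemma walkCount_logConvex {T : Finset G} (hT : ∀ s ∈ T, s⁻¹ ∈ T) (n : ℕ) :
    walkCount T (2 * (n + 1)) 1 ^ 2 ≤ walkCount T (2 * n) 1 * walkCount T (2 * (n + 2)) 1 := by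
  have h := tsum_mul_sq_le (walkCount_finite_support T n) (walkCount_finite_support T (n + 2))
  rwa [walkCount_inner hT, walkCount_sq hT, walkCount_sq hT,
    show n + (n + 2) = 2 * (n + 1) by ring] at h

/-- The squared `ℓ²` distance of `f` from its right translate by `y`. -/
def shiftDist (f : G → ℝ) (y : G) : ℝ := ∑' x, (f x - f (x * y)) ^ 2

lemma finite_support_sub_shift {f : G → ℝ} (hf : f.support.Finite) (y z : G) :
    (fun x => (f (x * y) - f (x * z)) ^ 2).support.Finite := by
  refine ((finite_support_shift hf y).union (finite_support_shift hf z)).subset fun x hx => ?_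
  by_contra h
  simp only [Set.mem_union, Function.mem_support, not_or, not_not] at h
  exact hx (by simp [h.1, h.2])

lemma shiftDist_nonneg (f : G → ℝ) (y : G) : 0 ≤ shiftDist f y :=
  tsum_nonneg fun _ => sq_nonneg _

lemma shiftDist_eq {f : G → ℝ} (hf : f.support.Finite) (y : G) :
    shiftDist f y = 2 * ∑' x, f x ^ 2 - 2 * ∑' x, f x * f (x * y) := by
  have h1 : Summable fun x => f x ^ 2 := by
    simp_rw [sq]; exact summable_mul_of_finite hf
  have h2 : Summable fun x => f (x * y) ^ 2 := by
    simp_rw [sq]; exact summable_mul_of_finite (finite_support_shift hf y)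
  have h3 : Summable fun x => f x * f (x * y) := summable_mul_of_finite hf
  have h4 : ∑' x, f (x * y) ^ 2 = ∑' x, f x ^ 2 := tsum_shift (fun x => f x ^ 2) y
  have h5 := ((h1.hasSum.add h2.hasSum).sub (h3.hasSum.mul_left 2)).tsum_eq
  rw [h4] at h5
  rw [shiftDist, two_mul (∑' x, f x ^ 2), ← h5]
  exact tsum_congr fun x => by ring

/-- A quantitative triangle inequality for translates by a product of `l.length` elements. -/
lemma shiftDist_list_prod {f : G → ℝ} (hf : f.support.Finite) {Q : ℝ} (l : List G)
    (hl : ∀ y ∈ l, shiftDist f y ≤ Q) : shiftDist f l.prod ≤ (l.length : ℝ) ^ 2 * Q := by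
  induction l with
  | nil => simp [shiftDist]
  | cons y l ih =>
    have hy : shiftDist f y ≤ Q := hl y (by simp)
    have ih := ih fun z hz => hl z (by simp [hz])
    set k : ℝ := (l.length : ℝ) with hk
    have hk0 : 0 ≤ k := by positivity
    rw [List.prod_cons, List.length_cons]
    push_cast
    rw [← hk]
    rcases hk0.eq_or_lt with h0 | hpos
    · have : l = [] := by
        rw [← List.length_eq_zero_iff]; rw [hk] at h0; exact_mod_cast h0.symm
      subst this
      simpa [← h0] using hy
    have hs1 : Summable fun x => (f x - f (x * y)) ^ 2 := by
      simpa using summable_of_finite (finite_support_sub_shift hf 1 y)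
    have hs2 : Summable fun x => (f (x * y) - f (x * (y * l.prod))) ^ 2 :=
      summable_of_finite (finite_support_sub_shift hf _ _)
    have hs3 : Summable fun x => (f x - f (x * (y * l.prod))) ^ 2 := by
      simpa using summable_of_finite (finite_support_sub_shift hf 1 (y * l.prod))
    have he : ∑' x, (f (x * y) - f (x * (y * l.prod))) ^ 2 = shiftDist f l.prod := by
      rw [shiftDist, ← tsum_shift (fun x => (f x - f (x * l.prod)) ^ 2) y]
      simp [mul_assoc]
    -- `k (u + v)² ≤ k (k + 1) u² + (k + 1) v²`, summed over the group
    have key : k * shiftDist f (y * l.prod) ≤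
        k * (k + 1) * shiftDist f y + (k + 1) * shiftDist f l.prod := by
      rw [← he, shiftDist, shiftDist, ← tsum_mul_left, ← tsum_mul_left, ← tsum_mul_left,
        ← (hs1.mul_left _).tsum_add (hs2.mul_left _)]
      refine (hs3.mul_left _).tsum_le_tsum (fun x => ?_) ((hs1.mul_left _).add (hs2.mul_left _))
      nlinarith [sq_nonneg (k * (f x - f (x * y)) - (f (x * y) - f (x * (y * l.prod))))]
    have h1 : k * (k + 1) * shiftDist f y ≤ k * (k + 1) * Q := by gcongr
    have h2 : (k + 1) * shiftDist f l.prod ≤ (k + 1) * (k ^ 2 * Q) := by gcongr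
    have h3 : k * shiftDist f (y * l.prod) ≤ k * ((k + 1) ^ 2 * Q) := by nlinarith
    exact le_of_mul_le_mul_left h3 hpos

/-- The Dirichlet form of the two-step walk evaluated at the `n`-step counts. -/
lemma sum_shiftDist {T : Finset G} (hT : ∀ s ∈ T, s⁻¹ ∈ T) (n : ℕ) :
    ∑ s ∈ T, ∑ u ∈ T, shiftDist (walkCount T n) (s * u) =
      2 * ((#T : ℝ) ^ 2 * walkCount T (2 * n) 1 - walkCount T (2 * n + 2) 1) := by
  have hf := walkCount_finite_support T n
  simp_rw [shiftDist_eq hf, Finset.sum_sub_distrib, walkCount_sq hT, ← Finset.mul_sum]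
  have : ∑ s ∈ T, ∑ u ∈ T, ∑' x, walkCount T n x * walkCount T n (x * (s * u)) =
      walkCount T (2 * n + 2) 1 := by
    rw [show 2 * n + 2 = n + (n + 2) by ring, ← walkCount_inner hT]
    simp only [walkCount, Finset.mul_sum, mul_assoc]
    rw [Summable.tsum_finsetSum fun s _ => summable_sum fun u _ => summable_mul_of_finite hf]
    refine Finset.sum_congr rfl fun s _ => ?_
    rw [Summable.tsum_finsetSum fun u _ => summable_mul_of_finite hf]
  rw [this]
  simp only [Finset.sum_const, nsmul_eq_mul]
  ring

/-- A Nash-type inequality in a group of exponential growth. Let two elements of `T * T` have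
`2 ^ r` distinct products of length `r` for every `r`. The `n`-step counts `f` have total mass
`|T| ^ n`, so their inner products with the translates by these `2 ^ r` products sum to at most
`|T| ^ (2 * n)`; if `2 ^ r` is large compared with `|T| ^ (2 * n) / ‖f‖²`, some translate of `f`
is therefore far from `f`. As it is reached in `r` double steps, the Dirichlet form of the two-step
walk at `f` is at least `‖f‖² / r²`. -/
lemma walkCount_decay {T : Finset G} (hT : ∀ s ∈ T, s⁻¹ ∈ T) (y : Bool → G)
    (hy : ∀ b, ∃ s ∈ T, ∃ u ∈ T, y b = s * u)
    (hfree : ∀ r : ℕ, Function.Injective fun w : Fin r → Bool => (List.ofFn fun i => y (w i)).prod)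
    (n r : ℕ) (hr : 2 * ((#T : ℝ) ^ n) ^ 2 ≤ 2 ^ r * walkCount T (2 * n) 1) :
    walkCount T (2 * n) 1 ≤
      r ^ 2 * (2 * ((#T : ℝ) ^ 2 * walkCount T (2 * n) 1 - walkCount T (2 * n + 2) 1)) := by
  classical
  have hf := walkCount_finite_support T n
  have hf0 := walkCount_nonneg T n
  set Q := 2 * ((#T : ℝ) ^ 2 * walkCount T (2 * n) 1 - walkCount T (2 * n + 2) 1) with hQ
  set f := walkCount T n with hfdef
  have hyQ : ∀ b, shiftDist f (y b) ≤ Q := by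
    intro b
    obtain ⟨s, hs, u, hu, h⟩ := hy b
    rw [h, hQ, ← sum_shiftDist hT n]
    have h1 : shiftDist f (s * u) ≤ ∑ u ∈ T, shiftDist f (s * u) :=
      Finset.single_le_sum (f := fun u => shiftDist f (s * u))
        (fun u _ => shiftDist_nonneg f (s * u)) hu
    exact h1.trans <| Finset.single_le_sum (f := fun s => ∑ u ∈ T, shiftDist f (s * u))
      (fun s _ => Finset.sum_nonneg fun u _ => shiftDist_nonneg f (s * u)) hs
  set P : (Fin r → Bool) → G := fun w => (List.ofFn fun i => y (w i)).prod with hP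
  have hdist : ∀ w, shiftDist f (P w) ≤ r ^ 2 * Q := by
    intro w
    have := shiftDist_list_prod hf (List.ofFn fun i => y (w i)) (Q := Q) (by
      intro z hz
      obtain ⟨i, rfl⟩ := (List.mem_ofFn).1 hz
      exact hyQ _)
    simpa using this
  have hsum : ∑ w, shiftDist f (P w) ≤ 2 ^ r * (r ^ 2 * Q) := by
    refine (Finset.sum_le_sum fun w _ => hdist w).trans_eq ?_
    simp
  have hcross : ∑ w, ∑' x, f x * f (x * P w) ≤ ((#T : ℝ) ^ n) ^ 2 := by
    rw [← Summable.tsum_finsetSum fun w _ => summable_mul_of_finite hf]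
    simp_rw [← Finset.mul_sum]
    rw [sq, ← walkCount_tsum T n, ← tsum_mul_right]
    refine (summable_mul_of_finite hf).tsum_le_tsum (fun x => ?_) (summable_mul_of_finite hf)
    refine mul_le_mul_of_nonneg_left ?_ (hf0 x)
    have hinj : Function.Injective fun w => x * P w := fun w w' h => hfree r (mul_left_cancel h)
    rw [← Finset.sum_image (f := f) (g := fun w => x * P w) hinj.injOn]
    exact (summable_of_finite hf).sum_le_tsum _ fun z _ => hf0 z
  have hexp : ∑ w, shiftDist f (P w) =
      2 ^ r * (2 * walkCount T (2 * n) 1) - 2 * ∑ w, ∑' x, f x * f (x * P w) := by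
    simp_rw [shiftDist_eq hf, Finset.sum_sub_distrib, ← Finset.mul_sum, hfdef, walkCount_sq hT]
    simp only [Finset.sum_const, Finset.card_univ, Fintype.card_fun, Fintype.card_bool,
      Fintype.card_fin, nsmul_eq_mul]
    push_cast
    ring
  have h2 : (0 : ℝ) < 2 ^ r := by positivity
  refine le_of_mul_le_mul_left ?_ h2
  linarith

end Walk

/-! ### Word counts as iterated convolutions -/

section Bridge

variable {G : Type*} [Group G]

/-- Splitting off the first letter of a word gives the recursion defining `walkCount`. -/
lemma natCard_words_eq (T : Finset G) (n : ℕ) (g : G) :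
    (Nat.card {w : Fin n → (T : Set G) // g * (List.ofFn fun i => (w i : G)).prod = 1} : ℝ) =
      walkCount T n g := by
  classical
  induction n generalizing g with
  | zero =>
    by_cases hg : g = 1
    · subst hg
      simp [walkCount]
    · simp [walkCount, hg]
  | succ n ih =>
    have e : {w : Fin (n + 1) → (T : Set G) // g * (List.ofFn fun i => (w i : G)).prod = 1} ≃
        Σ s : (T : Set G), {w : Fin n → (T : Set G) //
          g * (s : G) * (List.ofFn fun i => (w i : G)).prod = 1} :=
      { toFun := fun w => ⟨w.1 0, fun i => w.1 i.succ, by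
          have := w.2
          rwa [List.ofFn_succ, List.prod_cons, ← mul_assoc] at this⟩
        invFun := fun w => ⟨Fin.cons w.1 w.2.1, by
          have := w.2.2
          simpa [List.ofFn_succ, ← mul_assoc] using this⟩
        left_inv := fun w => by
          apply Subtype.ext
          exact Fin.cons_self_tail w.1
        right_inv := fun w => by
          rcases w with ⟨s, w, hw⟩
          rfl }
    rw [Nat.card_congr e, Nat.card_sigma]
    push_cast
    refine (Fintype.sum_congr _ _ fun s : (T : Set G) => ih (g * (s : G))).trans ?_
    exact Finset.sum_coe_sort T fun s => walkCount T n (g * s)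

lemma cogrowth_eq (T : Finset G) (n : ℕ) :
    (cogrowth G (T : Set G) n : ℝ) = walkCount T n 1 := by
  rw [← natCard_words_eq]
  simp [cogrowth]

end Bridge

/-! ### Confined words -/

noncomputable section Confined

variable {G : Type*} [Group G]

open Classical in
/-- `confCount T P n g` counts the words `w` of length `n` over `T` with `g * w = 1` such that
`g * v` lies in `P` for every proper prefix `v` of `w`.  For symmetric `T`, reading backwards, it
counts the words with product `g` all of whose nonempty prefixes have product in `P`. -/
def confCount (T : Finset G) (P : G → Prop) : ℕ → G → ℝ
  | 0, g => if g = 1 then 1 else 0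
  | n + 1, g => if P g then ∑ s ∈ T, confCount T P n (g * s) else 0

lemma confCount_nonneg (T : Finset G) (P : G → Prop) (n : ℕ) (g : G) :
    0 ≤ confCount T P n g := by
  induction n generalizing g with
  | zero => unfold confCount; split_ifs <;> norm_num
  | succ n ih =>
    unfold confCount
    split_ifs
    · exact Finset.sum_nonneg fun s _ => ih _
    · exact le_rfl

lemma confCount_le (T : Finset G) (P : G → Prop) (n : ℕ) (g : G) :
    confCount T P n g ≤ walkCount T n g := by
  induction n generalizing g with
  | zero => exact le_rfl
  | succ n ih =>
    unfold confCount
    split_ifs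
    · exact Finset.sum_le_sum fun s _ => ih _
    · exact walkCount_nonneg T (n + 1) g

lemma confCount_finite_support (T : Finset G) (P : G → Prop) (n : ℕ) :
    (confCount T P n).support.Finite :=
  (walkCount_finite_support T n).subset fun g hg => by
    have h1 := confCount_le T P n g
    have h2 : 0 < confCount T P n g := (confCount_nonneg T P n g).lt_of_ne' hg
    exact (h2.trans_le h1).ne'

lemma confCount_mem {T : Finset G} {P : G → Prop} (h1 : P 1) {n : ℕ} {g : G}
    (hg : confCount T P n g ≠ 0) : P g := by
  cases n with
  | zero =>
    by_contra h
    exact hg (if_neg fun h' : g = 1 => h (h' ▸ h1))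
  | succ n =>
    by_contra h
    exact hg (if_neg h)

/-- If `w` is a subsolution with growth factor `c` for the walk killed outside `P`, then at least
`c ^ n` words of length `n` stay in `P`; when these have few products, Cauchy-Schwarz turns this
into a lower bound for the return count. -/
lemma walkCount_lower {T : Finset G} (hT : ∀ s ∈ T, s⁻¹ ∈ T) {P : G → Prop} [DecidablePred P]
    (h1 : P 1) {w : G → ℝ} (hw : ∀ x, w x ≤ 1) (hw1 : w 1 = 1) {c : ℝ} (hc : 0 ≤ c)
    (hsub : ∀ x, P x → c * w x ≤ ∑ s ∈ T, if P (x * s) then w (x * s) else 0)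
    (n : ℕ) (A : Finset G) (hA : ∀ g, confCount T P n g ≠ 0 → g ∈ A) :
    (c ^ n) ^ 2 ≤ #A * walkCount T (2 * n) 1 := by
  have hmass : ∀ n, c ^ n ≤ ∑' x, confCount T P n x * w x := by
    intro n
    induction n with
    | zero =>
      rw [tsum_eq_single 1]
      · simp [confCount, hw1]
      · intro b hb; simp [confCount, hb]
    | succ n ih =>
      have e : ∑' x, confCount T P (n + 1) x * w x =
          ∑' x, (∑ s ∈ T, confCount T P n (x * s)) * (if P x then w x else 0) := by
        refine tsum_congr fun x => ?_
        by_cases h : P x <;> simp [confCount, h]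
      have hf := confCount_finite_support T P n
      rw [e, tsum_sum_shift_mul T hf, pow_succ, mul_comm]
      refine (mul_le_mul_of_nonneg_left ih hc).trans ?_
      rw [← tsum_mul_left]
      have hs : Summable fun x => c * (confCount T P n x * w x) :=
        (summable_mul_of_finite hf).mul_left c
      refine hs.tsum_le_tsum (fun x => ?_) (summable_mul_of_finite hf)
      by_cases hx : confCount T P n x = 0
      · simp [hx]
      · have := hsub x (confCount_mem h1 hx)
        rw [← sum_inv_eq hT fun s => if P (x * s) then w (x * s) else 0] at this
        have h0 := confCount_nonneg T P n x
        calc c * (confCount T P n x * w x) = confCount T P n x * (c * w x) := by ring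
          _ ≤ _ := mul_le_mul_of_nonneg_left this h0
  have hf := confCount_finite_support T P n
  have hA' : ∀ x ∉ A, confCount T P n x = 0 := fun x hx => by
    by_contra h; exact hx (hA x h)
  have hA1 : c ^ n ≤ ∑ x ∈ A, confCount T P n x := by
    rw [← tsum_eq_sum (L := .unconditional G) hA']
    refine (hmass n).trans ((summable_mul_of_finite hf).tsum_le_tsum (fun x => ?_)
      (summable_of_finite hf))
    exact mul_le_of_le_one_right (confCount_nonneg T P n x) (hw x)
  have hA2 : ∑ x ∈ A, confCount T P n x ^ 2 ≤ walkCount T (2 * n) 1 := by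
    rw [← walkCount_sq hT]
    have hs : Summable fun x => walkCount T n x ^ 2 := by
      simp_rw [sq]; exact summable_mul_of_finite (walkCount_finite_support T n)
    refine le_trans (Finset.sum_le_sum fun x _ => ?_) (hs.sum_le_tsum A fun x _ => sq_nonneg _)
    exact pow_le_pow_left₀ (confCount_nonneg T P n x) (confCount_le T P n x) 2
  calc (c ^ n) ^ 2 ≤ (∑ x ∈ A, confCount T P n x) ^ 2 :=
        pow_le_pow_left₀ (pow_nonneg hc n) hA1 2
    _ ≤ #A * ∑ x ∈ A, confCount T P n x ^ 2 := sq_sum_le_card_mul_sum_sq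
    _ ≤ _ := by gcongr

end Confined

/-! ### The group `BS(1,N)` and its affine representation -/

noncomputable section BS

variable {N : ℕ}

/-- The group `BS(1,N)`. -/
abbrev BS (N : ℕ) : Type := PresentedGroup (BSrels N)

/-- The generator `a` of `BS(1,N)`. -/
abbrev genA (N : ℕ) : BS N := PresentedGroup.of 0

/-- The generator `t` of `BS(1,N)`. -/
abbrev genT (N : ℕ) : BS N := PresentedGroup.of 1

lemma bs_rel (N : ℕ) : genT N * genA N * (genT N)⁻¹ = genA N ^ N := by
  have h : PresentedGroup.mk (BSrels N) (FreeGroup.of 1 * FreeGroup.of 0 * (FreeGroup.of 1)⁻¹ *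
      (FreeGroup.of 0 ^ N)⁻¹) = 1 :=
    PresentedGroup.one_of_mem (Set.mem_singleton _)
  simp only [map_mul, map_inv, map_pow] at h
  exact mul_inv_eq_one.1 h

lemma genT_pow_mul (N i : ℕ) (k : ℤ) :
    genT N ^ i * genA N ^ k = genA N ^ ((N : ℤ) ^ i * k) * genT N ^ i := by
  induction i generalizing k with
  | zero => simp
  | succ i ih =>
    have h : SemiconjBy (genT N) (genA N) (genA N ^ N) := by
      rw [SemiconjBy, ← bs_rel]; group
    have h2 := (h.zpow_right k).eq
    rw [← zpow_natCast, ← zpow_mul] at h2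
    rw [pow_succ, mul_assoc, h2, ← mul_assoc, ih, mul_assoc, ← pow_succ, ← mul_assoc,
      ← pow_succ]

/-- Every element of `BS(1,N)` has the form `t⁻ⁱ aᵏ tʲ`. -/
lemma bs_normal_form (g : BS N) :
    ∃ (i : ℕ) (k : ℤ) (j : ℕ), g = (genT N ^ i)⁻¹ * genA N ^ k * genT N ^ j := by
  have hg : g ∈ Subgroup.closure (Set.range (PresentedGroup.of (rels := BSrels N))) := by
    rw [PresentedGroup.closure_range_of]; trivial
  have hA : ∀ (m : ℤ) (i : ℕ), genA N ^ m * (genT N ^ i)⁻¹ =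
      (genT N ^ i)⁻¹ * genA N ^ ((N : ℤ) ^ i * m) := by
    intro m i
    rw [mul_inv_eq_iff_eq_mul, mul_assoc, ← genT_pow_mul]; group
  induction hg using Subgroup.closure_induction_left with
  | one => exact ⟨0, 0, 0, by simp⟩
  | mul_left x hx y hy ih =>
    obtain ⟨i, k, j, rfl⟩ := ih
    obtain ⟨b, rfl⟩ := hx
    fin_cases b
    · refine ⟨i, (N : ℤ) ^ i * 1 + k, j, ?_⟩
      have := hA 1 i
      rw [zpow_one] at this
      rw [zpow_add, ← mul_assoc (genT N ^ i)⁻¹, ← this]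
      simp only [mul_assoc]; rfl
    · cases i with
      | zero =>
        refine ⟨0, (N : ℤ) ^ 1 * k, j + 1, ?_⟩
        have := genT_pow_mul N 1 k
        rw [pow_one] at this
        rw [pow_zero, inv_one, one_mul, one_mul, pow_succ' (genT N), ← mul_assoc _ (genT N),
          ← this]
        simp only [mul_assoc]; rfl
      | succ i =>
        refine ⟨i, k, j, ?_⟩
        change genT N * _ = _
        rw [pow_succ]; group
  | inv_mul_cancel x hx y hy ih =>
    obtain ⟨i, k, j, rfl⟩ := ih
    obtain ⟨b, rfl⟩ := hx
    fin_cases b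
    · refine ⟨i, (N : ℤ) ^ i * (-1) + k, j, ?_⟩
      have := hA (-1) i
      rw [zpow_neg_one] at this
      rw [zpow_add, ← mul_assoc (genT N ^ i)⁻¹, ← this]
      simp only [mul_assoc]; rfl
    · refine ⟨i + 1, k, j, ?_⟩
      change (genT N)⁻¹ * _ = _
      rw [pow_succ]; group

/-- The `t`-exponent sum. -/
def heightHom (N : ℕ) : BS N →* Multiplicative ℤ :=
  PresentedGroup.toGroup (f := ![1, Multiplicative.ofAdd 1]) (by
    rintro r rfl
    simp)

/-- The `t`-exponent sum as an integer. -/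
def height (g : BS N) : ℤ := (heightHom N g).toAdd

@[simp] lemma height_mul (g h : BS N) : height (g * h) = height g + height h := by
  simp [height]

@[simp] lemma height_inv (g : BS N) : height g⁻¹ = - height g := by
  simp [height]

@[simp] lemma height_one : height (1 : BS N) = 0 := by
  simp [height]

@[simp] lemma height_genA : height (genA N) = 0 := by
  simp [height, heightHom]

@[simp] lemma height_genT : height (genT N) = 1 := by
  simp [height, heightHom]

/-- The affine action on `ℚ` with `a x = x + 1` and `t x = N x`. -/
def affine (hN : (N : ℚ) ≠ 0) : BS N →* Equiv.Perm ℚ :=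
  PresentedGroup.toGroup (f := ![Equiv.addRight (1 : ℚ), Equiv.mulLeft₀ (N : ℚ) hN]) (by
    rintro r rfl
    have h : ∀ (n : ℕ) (x : ℚ), (Equiv.addRight (1 : ℚ) ^ n) x = x + n := by
      intro n
      induction n with
      | zero => simp
      | succ n ih => intro x; rw [pow_succ, Equiv.Perm.mul_apply, ih]; simp; ring
    simp only [map_mul, map_inv, map_pow, FreeGroup.lift_apply_of, Matrix.cons_val_zero,
      Matrix.cons_val_one]
    rw [mul_inv_eq_one]
    ext x
    rw [h, Equiv.Perm.mul_apply, Equiv.Perm.mul_apply, show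
      (Equiv.mulLeft₀ (N : ℚ) hN)⁻¹ x = (N : ℚ)⁻¹ * x from rfl]
    simp [mul_add, mul_inv_cancel_left₀ hN])

variable (hN : (N : ℚ) ≠ 0)

lemma affine_genA (x : ℚ) : affine hN (genA N) x = x + 1 := by
  simp [affine]

lemma affine_genT (x : ℚ) : affine hN (genT N) x = N * x := by
  simp [affine]

lemma affine_genA_inv (x : ℚ) : affine hN (genA N)⁻¹ x = x - 1 := by
  rw [map_inv, Equiv.Perm.inv_eq_iff_eq, affine_genA]; ring

lemma affine_genT_inv (x : ℚ) : affine hN (genT N)⁻¹ x = (N : ℚ)⁻¹ * x := by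
  rw [map_inv, Equiv.Perm.inv_eq_iff_eq, affine_genT, mul_inv_cancel_left₀ hN]

lemma affine_genA_zpow (k : ℤ) (x : ℚ) : affine hN (genA N ^ k) x = x + k := by
  induction k generalizing x with
  | zero => simp
  | succ k ih =>
    rw [zpow_add_one, map_mul, Equiv.Perm.mul_apply, affine_genA, ih]; push_cast; ring
  | pred k ih =>
    rw [zpow_sub_one, map_mul, Equiv.Perm.mul_apply, affine_genA_inv, ih]; push_cast; ring

lemma affine_apply (g : BS N) (x : ℚ) :
    affine hN g x = (N : ℚ) ^ height g * x + affine hN g 0 := by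
  have hg : g ∈ Subgroup.closure (Set.range (PresentedGroup.of (rels := BSrels N))) := by
    rw [PresentedGroup.closure_range_of]; trivial
  induction hg using Subgroup.closure_induction_right generalizing x with
  | one => simp
  | mul_right y hy z hz ih =>
    obtain ⟨b, rfl⟩ := hz
    rw [map_mul, Equiv.Perm.mul_apply, Equiv.Perm.mul_apply, height_mul, zpow_add₀ hN,
      ih, ih (affine hN _ 0)]
    fin_cases b
    · change _ * affine hN (genA N) x + _ = _ * N ^ height (genA N) * _ + (_ *
        affine hN (genA N) 0 + _)
      rw [affine_genA, affine_genA, height_genA]; simp; ring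
    · change _ * affine hN (genT N) x + _ = _ * N ^ height (genT N) * _ + (_ *
        affine hN (genT N) 0 + _)
      rw [affine_genT, affine_genT, height_genT]; simp; ring
  | mul_inv_cancel y hy z hz ih =>
    obtain ⟨b, rfl⟩ := hz
    rw [map_mul, Equiv.Perm.mul_apply, Equiv.Perm.mul_apply, height_mul, zpow_add₀ hN,
      ih, ih (affine hN _ 0)]
    fin_cases b
    · change _ * affine hN (genA N)⁻¹ x + _ = _ * N ^ height (genA N)⁻¹ * _ + (_ *
        affine hN (genA N)⁻¹ 0 + _)
      rw [affine_genA_inv, affine_genA_inv, height_inv, height_genA]; simp; ring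
    · change _ * affine hN (genT N)⁻¹ x + _ = _ * N ^ height (genT N)⁻¹ * _ + (_ *
        affine hN (genT N)⁻¹ 0 + _)
      rw [affine_genT_inv, affine_genT_inv, height_inv, height_genT]; simp; ring

/-- Faithfulness of the affine representation. -/
lemma bs_ext {g g' : BS N} (h1 : height g = height g')
    (h2 : affine hN g 0 = affine hN g' 0) : g = g' := by
  have hp : affine hN g = affine hN g' := by
    ext x; rw [affine_apply, affine_apply hN g', h1, h2]
  rw [← inv_mul_eq_one]
  set u := g⁻¹ * g' with hu
  have hu1 : height u = 0 := by rw [hu]; simp [h1]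
  have hu2 : affine hN u = 1 := by rw [hu, map_mul, map_inv, hp, inv_mul_cancel]
  obtain ⟨i, k, j, h⟩ := bs_normal_form u
  have hpow : ∀ m : ℕ, height (genT N ^ m) = m := by
    intro m
    induction m with
    | zero => simp
    | succ m ih => rw [pow_succ, height_mul, ih]; simp
  have hzpow : height (genA N ^ k) = 0 := by simp [height, heightHom]
  have hij : i = j := by
    rw [h, height_mul, height_mul, height_inv, hpow, hpow, hzpow] at hu1
    omega
  subst hij
  have h3 : genA N ^ k = genT N ^ i * u * (genT N ^ i)⁻¹ := by rw [h]; group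
  have h4 : affine hN (genA N ^ k) 0 = 0 := by
    rw [h3, map_mul, map_mul, hu2, mul_one, map_inv, mul_inv_cancel]; rfl
  rw [affine_genA_zpow] at h4
  have : k = 0 := by simpa using h4
  rw [h, this]; group

open scoped Classical in
/-- The symmetric generating set `{a, a⁻¹, t, t⁻¹}`. -/
def bsGen (N : ℕ) : Finset (BS N) := {genA N, (genA N)⁻¹, genT N, (genT N)⁻¹}

lemma bsGen_inv : ∀ s ∈ bsGen N, s⁻¹ ∈ bsGen N := by
  intro s hs
  simp only [bsGen, Finset.mem_insert, Finset.mem_singleton] at hs ⊢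
  rcases hs with rfl | rfl | rfl | rfl <;> simp

include hN in
lemma bsGen_sum (F : BS N → ℝ) :
    ∑ s ∈ bsGen N, F s = F (genA N) + F (genA N)⁻¹ + F (genT N) + F (genT N)⁻¹ := by
  have h1 : genA N ≠ (genA N)⁻¹ := fun h => by
    have := congrArg (fun g => affine hN g 0) h
    simp only [affine_genA, affine_genA_inv] at this
    norm_num at this
  have h2 : ∀ {x y : BS N}, height x ≠ height y → x ≠ y := fun h h' => h (h' ▸ rfl)
  classical
  rw [bsGen, Finset.sum_insert, Finset.sum_insert, Finset.sum_insert, Finset.sum_singleton]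
  · ring
  · rw [Finset.mem_singleton]; exact h2 (by simp)
  · simp only [Finset.mem_insert, Finset.mem_singleton, not_or]
    exact ⟨h2 (by simp), h2 (by simp)⟩
  · simp only [Finset.mem_insert, Finset.mem_singleton, not_or]
    exact ⟨h1, h2 (by simp), h2 (by simp)⟩

include hN in
lemma bsGen_card : #(bsGen N) = 4 := by
  have := bsGen_sum hN fun _ => 1
  simp only [Finset.sum_const, nsmul_eq_mul, mul_one] at this
  have h : (#(bsGen N) : ℝ) = 4 := by rw [this]; norm_num
  exact_mod_cast h

/-- Two generators of a free semigroup: `at` and `tt`. -/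
def freePair (N : ℕ) (b : Bool) : BS N := if b then genA N * genT N else genT N * genT N

lemma affine_freePair (b : Bool) (x : ℤ) :
    affine hN (freePair N b) x = ((if b then N * x + 1 else N * (N * x) : ℤ) : ℚ) := by
  cases b <;> simp [freePair, affine_genA, affine_genT]

lemma affine_freePair_prod (l : List Bool) :
    ∃ m : ℤ, affine hN (l.map (freePair N)).prod 0 = m := by
  induction l with
  | nil => exact ⟨0, by simp⟩
  | cons b l ih =>
    obtain ⟨m, hm⟩ := ih
    exact ⟨_, by rw [List.map_cons, List.prod_cons, map_mul, Equiv.Perm.mul_apply, hm,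
      affine_freePair]⟩

include hN in
/-- Ping-pong: `at` maps `ℤ` into `1 + Nℤ` and `tt` maps it into `Nℤ`. -/
lemma freePair_injective (hN2 : 2 ≤ N) (l l' : List Bool) (hl : l.length = l'.length)
    (h : (l.map (freePair N)).prod = (l'.map (freePair N)).prod) : l = l' := by
  induction l generalizing l' with
  | nil => simpa [eq_comm] using hl
  | cons b l ih =>
    cases l' with
    | nil => simp at hl
    | cons b' l' =>
      obtain ⟨m, hm⟩ := affine_freePair_prod hN l
      obtain ⟨m', hm'⟩ := affine_freePair_prod hN l'
      have hb : b = b' := by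
        have h0 := congrArg (fun g => affine hN g 0) h
        simp only [List.map_cons, List.prod_cons, map_mul, Equiv.Perm.mul_apply, hm, hm',
          affine_freePair] at h0
        have h0 : (if b then (N : ℤ) * m + 1 else N * (N * m)) =
            (if b' then (N : ℤ) * m' + 1 else N * (N * m')) := by exact_mod_cast h0
        have key : ∀ u v : ℤ, (N : ℤ) * u + 1 ≠ N * v := by
          intro u v huv
          have : (N : ℤ) ∣ 1 := ⟨v - u, by linarith⟩
          have := Int.le_of_dvd one_pos this
          omega
        cases b <;> cases b' <;> simp only [if_true, if_false, Bool.false_eq_true] at h0 ⊢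
        · exact (key _ _ h0.symm).elim
        · exact (key _ _ h0).elim
      subst hb
      rw [List.map_cons, List.map_cons, List.prod_cons, List.prod_cons] at h
      rw [ih l' (by simpa using hl) (mul_left_cancel h)]

end BS

/-! ### Lower bound for the return counts of `BS(1,N)` -/

section LowerBound

open Real

variable {N : ℕ}

/-- The position of a confined word of length `n` lies in `N⁻ᴸ ℤ` and is at most `n Nᴸ`. -/
lemma confCount_position (hN : (N : ℚ) ≠ 0) (hN2 : 2 ≤ N) (L n : ℕ) (g : BS N)
    (hg : confCount (bsGen N) (fun x => |height x| ≤ (L : ℤ)) n g ≠ 0) :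
    ∃ m : ℤ, |m| ≤ n * (N : ℤ) ^ (2 * L) ∧ affine hN g 0 = m / (N : ℚ) ^ L := by
  induction n generalizing g with
  | zero =>
    have : g = 1 := by
      by_contra h; exact hg (if_neg h)
    exact ⟨0, by simp, by simp [this]⟩
  | succ n ih =>
    have hP := confCount_mem (P := fun x : BS N => |height x| ≤ (L : ℤ)) (by simp) hg
    rw [confCount, if_pos hP] at hg
    obtain ⟨s, hs, hne⟩ := Finset.exists_ne_zero_of_sum_ne_zero hg
    obtain ⟨m, hm, hm2⟩ := ih _ hne
    rw [map_mul, Equiv.Perm.mul_apply, affine_apply] at hm2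
    obtain ⟨h1, h2⟩ := abs_le.1 hP
    obtain ⟨j, hj⟩ := Int.eq_ofNat_of_zero_le (show 0 ≤ height g + L by omega)
    have hN0 : (0 : ℚ) < N := lt_of_le_of_ne (by positivity) hN.symm
    have hpow : (N : ℚ) ^ height g = (N : ℚ) ^ j / (N : ℚ) ^ L := by
      rw [show height g = (j : ℤ) - (L : ℤ) by omega, zpow_sub₀ hN]; simp
    have hjle : (N : ℤ) ^ j ≤ (N : ℤ) ^ (2 * L) :=
      pow_le_pow_right₀ (by omega) (by omega)
    have hj0 : (0 : ℤ) ≤ (N : ℤ) ^ j := by positivity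
    have hX0 : (0 : ℤ) ≤ (N : ℤ) ^ (2 * L) := by positivity
    rw [hpow] at hm2
    have hL0 : (N : ℚ) ^ L ≠ 0 := by positivity
    rw [abs_le] at hm
    simp only [bsGen, Finset.mem_insert, Finset.mem_singleton] at hs
    rcases hs with rfl | rfl | rfl | rfl
    · refine ⟨m - (N : ℤ) ^ j, ?_, ?_⟩
      · rw [abs_le]; push_cast; constructor <;> linarith
      · rw [affine_genA] at hm2
        push_cast
        rw [sub_div, ← hm2]; ring
    · refine ⟨m + (N : ℤ) ^ j, ?_, ?_⟩
      · rw [abs_le]; push_cast; constructor <;> linarith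
      · rw [affine_genA_inv] at hm2
        push_cast
        rw [add_div, ← hm2]; ring
    · refine ⟨m, ?_, ?_⟩
      · rw [abs_le]; push_cast; constructor <;> linarith
      · rw [affine_genT] at hm2
        rw [← hm2]; ring
    · refine ⟨m, ?_, ?_⟩
      · rw [abs_le]; push_cast; constructor <;> linarith
      · rw [affine_genT_inv] at hm2
        rw [← hm2]; ring

/-- `cos (θ · height)` with `θ = π / (2 (L + 1))` is the ground state of the height process
killed outside `[-L, L]`. -/
lemma bs_lower (hN2 : 2 ≤ N) (L n : ℕ) :
    ((2 + 2 * cos (π / (2 * (L + 1)))) ^ n) ^ 2 ≤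
      ((2 * L + 1) * (2 * (n * N ^ (2 * L)) + 1) : ℕ) * walkCount (bsGen N) (2 * n) 1 := by
  classical
  have hN : (N : ℚ) ≠ 0 := by positivity
  set θ := π / (2 * ((L : ℝ) + 1)) with hθ
  have hL : (0 : ℝ) < (L : ℝ) + 1 := by positivity
  have hθL : θ * ((L : ℝ) + 1) = π / 2 := by rw [hθ]; field_simp
  set P : BS N → Prop := fun x => |height x| ≤ (L : ℤ) with hP
  have hwalk := walkCount_lower (bsGen_inv (N := N)) (P := P) (by simp [hP])
    (w := fun x => cos (θ * height x)) (fun x => cos_le_one _) (by simp)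
    (c := 2 + 2 * cos θ) (by linarith [neg_one_le_cos θ])
    (by
      intro x hx
      obtain ⟨h1, h2⟩ := abs_le.1 hx
      rw [bsGen_sum hN]
      have hPa : P (x * genA N) := by simpa [hP] using hx
      have hPa' : P (x * (genA N)⁻¹) := by simpa [hP] using hx
      have hup : cos (θ * (height x + 1)) ≤
          if P (x * genT N) then cos (θ * height (x * genT N)) else 0 := by
        split_ifs with h
        · simp
        · have : height x = L := by
            simp only [hP, height_mul, height_genT, abs_le, not_and_or, not_le] at h
            omega
          rw [this]; push_cast; rw [hθL, cos_pi_div_two]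
      have hdown : cos (θ * (height x - 1)) ≤
          if P (x * (genT N)⁻¹) then cos (θ * height (x * (genT N)⁻¹)) else 0 := by
        split_ifs with h
        · simp [sub_eq_add_neg]
        · have : height x = -L := by
            simp only [hP, height_mul, height_inv, height_genT, abs_le, not_and_or, not_le] at h
            omega
          rw [this]; push_cast
          rw [show θ * (-(L : ℝ) - 1) = -(θ * (L + 1)) by ring, hθL, cos_neg, cos_pi_div_two]
      rw [if_pos hPa, if_pos hPa']
      have e1 : cos (θ * height (x * genA N)) = cos (θ * height x) := by simp
      have e2 : cos (θ * height (x * (genA N)⁻¹)) = cos (θ * height x) := by simp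
      rw [e1, e2]
      have e3 : cos (θ * (height x + 1)) + cos (θ * (height x - 1)) =
          2 * cos θ * cos (θ * height x) := by
        rw [mul_add, mul_sub, mul_one, cos_add, cos_sub]; ring
      refine le_trans (le_of_eq ?_) (add_le_add (add_le_add_right hup _) hdown)
      linear_combination -e3)
    n
  set M : ℤ := n * (N : ℤ) ^ (2 * L) with hM
  set F : Finset (ℤ × ℤ) := Finset.Icc (-(L : ℤ)) L ×ˢ Finset.Icc (-M) M with hF
  set ψ : BS N → ℤ × ℚ := fun g => (height g, affine hN g 0) with hψ
  have hinj : Function.Injective ψ := fun g g' h =>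
    bs_ext hN (congrArg Prod.fst h) (congrArg Prod.snd h)
  set F' := F.image fun p : ℤ × ℤ => (p.1, (p.2 : ℚ) / (N : ℚ) ^ L) with hF'
  have hcard : #(F'.preimage ψ hinj.injOn) ≤ (2 * L + 1) * (2 * (n * N ^ (2 * L)) + 1) := by
    rw [Finset.card_preimage]
    refine (Finset.card_filter_le _ _).trans (Finset.card_image_le.trans_eq ?_)
    rw [hF, Finset.card_product, Int.card_Icc, Int.card_Icc]
    have h2 : M = ((n * N ^ (2 * L) : ℕ) : ℤ) := by rw [hM]; push_cast; ring
    rw [h2]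
    congr 1 <;> omega
  refine (hwalk (F'.preimage ψ hinj.injOn) ?_).trans ?_
  · intro g hg
    obtain ⟨m, hm, hm2⟩ := confCount_position hN hN2 L n g hg
    have hPg : P g := confCount_mem (by simp [hP]) hg
    rw [Finset.mem_preimage, hF', Finset.mem_image]
    exact ⟨(height g, m), by simp only [hF, Finset.mem_product, Finset.mem_Icc];
                             exact ⟨abs_le.1 hPg, abs_le.1 hm⟩, by simp [hψ, hm2]⟩
  · refine mul_le_mul_of_nonneg_right ?_ (walkCount_nonneg _ _ _)
    exact_mod_cast hcard

/-- Confining to heights at most `L` for time `n ≤ L³` costs a factor `exp (-O(n / L²))`, and the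
number of available positions is `exp (O(L))`. -/
lemma bs_lower_exp (hN2 : 2 ≤ N) (L n : ℕ) (hL : 1 ≤ L) (hn : n ≤ L ^ 3) :
    16 ^ n * exp (-((11 + 2 * N) * L)) ≤ walkCount (bsGen N) (2 * n) 1 := by
  have h := bs_lower hN2 L n
  have hL1 : (1 : ℝ) ≤ L := by exact_mod_cast hL
  set θ := π / (2 * ((L : ℝ) + 1)) with hθ
  have hθ0 : 0 ≤ θ := by positivity
  have hθL : θ * L ≤ 2 := by
    rw [hθ, div_mul_eq_mul_div, div_le_iff₀ (by positivity)]
    nlinarith [pi_le_four]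
  have hθ1 : θ ≤ 1 := by
    rw [hθ, div_le_one (by positivity)]
    nlinarith [pi_le_four]
  have hcos : 4 * exp (-(θ ^ 2 / 2)) ≤ 2 + 2 * cos θ := by
    have h1 := one_sub_sq_div_two_le_cos (x := θ)
    have h2 : exp (-(θ ^ 2 / 2)) ≤ 1 - θ ^ 2 / 4 := by
      rw [exp_neg]
      have h3 := add_one_le_exp (θ ^ 2 / 2)
      have h4 : 0 ≤ θ ^ 2 := sq_nonneg _
      have h5 : θ ^ 2 ≤ 1 := by nlinarith
      rw [inv_le_iff_one_le_mul₀ (exp_pos _)]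
      have : (1 - θ ^ 2 / 4) * (θ ^ 2 / 2 + 1) ≤ (1 - θ ^ 2 / 4) * exp (θ ^ 2 / 2) :=
        mul_le_mul_of_nonneg_left h3 (by linarith)
      nlinarith
    linarith
  have hmass : 16 ^ n * exp (-(4 * L)) ≤ ((2 + 2 * cos θ) ^ n) ^ 2 := by
    have h1 : ((4 * exp (-(θ ^ 2 / 2))) ^ n) ^ 2 ≤ ((2 + 2 * cos θ) ^ n) ^ 2 := by gcongr
    refine le_trans ?_ h1
    have h2 : ((4 * exp (-(θ ^ 2 / 2))) ^ n) ^ 2 = 16 ^ n * exp (-(n * θ ^ 2)) := by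
      rw [← pow_mul, mul_comm n 2, pow_mul, mul_pow, ← exp_nat_mul, mul_pow, ← exp_nat_mul]
      congr 2
      · norm_num
      · push_cast; ring
    rw [h2]
    have hn' : (n : ℝ) ≤ (L : ℝ) ^ 3 := by exact_mod_cast hn
    have h3 : n * θ ^ 2 ≤ 4 * L := by
      calc n * θ ^ 2 ≤ (L : ℝ) ^ 3 * θ ^ 2 := by gcongr
        _ = L * (θ * L) ^ 2 := by ring
        _ ≤ L * 2 ^ 2 := by gcongr
        _ = 4 * L := by ring
    gcongr
  have hcard : (((2 * L + 1) * (2 * (n * N ^ (2 * L)) + 1) : ℕ) : ℝ) ≤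
      exp ((7 + 2 * N) * L) := by
    have h1 : (2 * L + 1 : ℝ) ≤ exp (2 * L) := add_one_le_exp _
    have hn' : (n : ℝ) ≤ (L : ℝ) ^ 3 := by exact_mod_cast hn
    have hX : (1 : ℝ) ≤ (N : ℝ) ^ (2 * L) := one_le_pow₀ (by exact_mod_cast (by omega : 1 ≤ N))
    have hL3 : (1 : ℝ) ≤ (L : ℝ) ^ 3 := one_le_pow₀ hL1
    have h2 : 2 * (n * (N : ℝ) ^ (2 * L)) + 1 ≤ 3 * (L : ℝ) ^ 3 * (N : ℝ) ^ (2 * L) := by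
      have : n * (N : ℝ) ^ (2 * L) ≤ (L : ℝ) ^ 3 * (N : ℝ) ^ (2 * L) := by gcongr
      nlinarith
    have h3 : (3 : ℝ) ≤ exp (2 * L) := by linarith
    have h4 : (L : ℝ) ^ 3 ≤ exp (3 * L) := by
      have : (L : ℝ) ≤ exp L := by linarith [add_one_le_exp (L : ℝ)]
      calc (L : ℝ) ^ 3 ≤ exp L ^ 3 := by gcongr
        _ = exp (3 * L) := by rw [← exp_nat_mul]; norm_num
    have h5 : (N : ℝ) ^ (2 * L) ≤ exp (2 * N * L) := by
      have : (N : ℝ) ≤ exp N := by linarith [add_one_le_exp (N : ℝ)]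
      calc (N : ℝ) ^ (2 * L) ≤ exp N ^ (2 * L) := by gcongr
        _ = exp (2 * N * L) := by rw [← exp_nat_mul]; push_cast; ring_nf
    push_cast
    calc (2 * L + 1 : ℝ) * (2 * (n * (N : ℝ) ^ (2 * L)) + 1)
        ≤ exp (2 * L) * (exp (2 * L) * exp (3 * L) * exp (2 * N * L)) := by
          refine mul_le_mul h1 (h2.trans ?_) (by positivity) (exp_pos _).le
          gcongr
      _ = exp ((7 + 2 * N) * L) := by
          rw [← exp_add, ← exp_add, ← exp_add]; ring_nf
  have hall : 16 ^ n * exp (-(4 * L)) ≤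
      exp ((7 + 2 * N) * L) * walkCount (bsGen N) (2 * n) 1 :=
    hmass.trans (h.trans (mul_le_mul_of_nonneg_right hcard (walkCount_nonneg _ _ _)))
  have e : exp (-(4 * L : ℝ)) = exp ((7 + 2 * N) * L) * exp (-((11 + 2 * N) * L)) := by
    rw [← exp_add]; ring_nf
  rw [e] at hall
  refine le_of_mul_le_mul_left ?_ (exp_pos ((7 + 2 * (N : ℝ)) * L))
  linarith

end LowerBound

/-! ### From gap estimates to asymptotic equivalence -/

section Asymptotics

open Real Filter Topology

/-- Log-convex sequences have nondecreasing ratios. -/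
lemma ratio_monotone {d : ℕ → ℝ} (hpos : ∀ k, 0 < d k)
    (hconv : ∀ k, d (k + 1) ^ 2 ≤ d k * d (k + 2)) : Monotone fun k => d (k + 1) / d k := by
  refine monotone_nat_of_le_succ fun k => ?_
  rw [div_le_div_iff₀ (hpos k) (hpos (k + 1))]
  nlinarith [hconv k]

/-- `d n` is the product of the `n` ratios before the one at index `n`, which is the largest. -/
lemma le_ratio_pow {d : ℕ → ℝ} (h0 : d 0 = 1) (hpos : ∀ k, 0 < d k)
    (hmono : Monotone fun k => d (k + 1) / d k) (n : ℕ) :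
    d n ≤ (d (n + 1) / d n) ^ n := by
  have : ∀ k ≤ n, d k ≤ (d (n + 1) / d n) ^ k := by
    intro k
    induction k with
    | zero => simp [h0]
    | succ k ih =>
      intro hk
      have h1 := ih (by omega)
      have h2 : d (k + 1) / d k ≤ d (n + 1) / d n := hmono (by omega)
      have h3 : 0 ≤ d (n + 1) / d n := (div_pos (hpos _) (hpos _)).le
      rw [div_le_iff₀ (hpos k)] at h2
      rw [pow_succ, mul_comm]
      exact h2.trans (mul_le_mul_of_nonneg_left h1 h3)
  exact this n le_rfl

/-- A lower bound on `d` bounds the gap of the ratio at index `L³` by a multiple of `L⁻²`. -/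
lemma gap_upper {d : ℕ → ℝ} (h0 : d 0 = 1) (hpos : ∀ k, 0 < d k)
    (hmono : Monotone fun k => d (k + 1) / d k) {C : ℝ}
    (hlow : ∀ L n : ℕ, 1 ≤ L → n ≤ L ^ 3 → 16 ^ n * exp (-(C * L)) ≤ d n)
    (L : ℕ) (hL : 1 ≤ L) : 16 - d (L ^ 3 + 1) / d (L ^ 3) ≤ 16 * C / L ^ 2 := by
  have h1 := (hlow L (L ^ 3) hL le_rfl).trans (le_ratio_pow h0 hpos hmono (L ^ 3))
  have hL0 : (0 : ℝ) < L := by exact_mod_cast hL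
  have e : (16 : ℝ) ^ (L ^ 3) * exp (-(C * L)) = (16 * exp (-(C / L ^ 2))) ^ (L ^ 3) := by
    rw [mul_pow, ← exp_nat_mul]
    congr 2
    push_cast
    field_simp
  rw [e] at h1
  have h2 := (pow_le_pow_iff_left₀ (by positivity) (div_pos (hpos _) (hpos _)).le
    (by positivity)).1 h1
  have h3 := add_one_le_exp (-(C / (L : ℝ) ^ 2))
  have h4 : 16 * C / (L : ℝ) ^ 2 = 16 * (C / L ^ 2) := by ring
  linarith

/-- The gap of the ratio is at least of order `L⁻²` up to index `L³`: the lower bound on `d` lets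
the decay inequality be applied with only `r = M L` factors. -/
lemma gap_lower {d : ℕ → ℝ} (hpos : ∀ k, 0 < d k) {C : ℝ}
    (hlow : ∀ L n : ℕ, 1 ≤ L → n ≤ L ^ 3 → 16 ^ n * exp (-(C * L)) ≤ d n)
    (hdecay : ∀ n r : ℕ, 2 * 16 ^ n ≤ 2 ^ r * d n →
      d n ≤ r ^ 2 * (2 * (16 * d n - d (n + 1)))) :
    ∃ M : ℕ, 1 ≤ M ∧ ∀ L n : ℕ, 1 ≤ L → n ≤ L ^ 3 →
      1 / (2 * (M : ℝ) ^ 2 * L ^ 2) ≤ 16 - d (n + 1) / d n := by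
  obtain ⟨M, hM⟩ := exists_nat_ge ((|C| + log 2) / log 2)
  have hlog : 0 < log 2 := log_pos one_lt_two
  rw [div_le_iff₀ hlog] at hM
  have hM1 : 1 ≤ M := by
    by_contra h
    have : M = 0 := by omega
    subst this
    simp only [Nat.cast_zero, zero_mul] at hM
    linarith [abs_nonneg C]
  refine ⟨M, hM1, fun L n hL hn => ?_⟩
  have hL1 : (1 : ℝ) ≤ L := by exact_mod_cast hL
  have hpow : 2 * exp (C * L) ≤ 2 ^ (M * L) := by
    nth_rw 1 2 [← exp_log (two_pos : (0 : ℝ) < 2)]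
    rw [← exp_add, ← exp_nat_mul, exp_le_exp]
    push_cast
    have h1 : C * L ≤ |C| * L := by gcongr; exact le_abs_self C
    nlinarith
  have h2 : 2 * 16 ^ n ≤ 2 ^ (M * L) * d n := by
    have h3 := hlow L n hL hn
    calc 2 * (16 : ℝ) ^ n = 2 * exp (C * L) * (16 ^ n * exp (-(C * L))) := by
          have : exp (C * L) * exp (-(C * L)) = 1 := by rw [← exp_add]; simp
          linear_combination (-2 * 16 ^ n) * this
      _ ≤ _ := mul_le_mul hpow h3 (by positivity) (by positivity)
  have h4 := hdecay n _ h2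
  have hd := hpos n
  have hM0 : (1 : ℝ) ≤ M := by exact_mod_cast hM1
  have e : 16 - d (n + 1) / d n = (16 * d n - d (n + 1)) / d n := by field_simp
  rw [e, div_le_div_iff₀ (by positivity) hd]
  push_cast at h4
  linarith

lemma three_halves_rpow (x : ℕ) : (x : ℝ) ^ ((3 : ℝ) / 2) = √x ^ 3 := by
  rw [sqrt_eq_rpow, ← rpow_natCast, ← rpow_mul (by positivity)]
  norm_num

/-- A gap of order `k ^ (-2/3)` first falls below `1 / n` at an index `k` of order `n ^ (3/2)`. -/
lemma asympEquiv_sInf {d : ℕ → ℝ} {C : ℝ}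
    (hup : ∀ L : ℕ, 1 ≤ L → 16 - d (L ^ 3 + 1) / d (L ^ 3) ≤ C / L ^ 2) {M : ℕ} (hM : 1 ≤ M)
    (hlow : ∀ L n : ℕ, 1 ≤ L → n ≤ L ^ 3 →
      1 / (2 * (M : ℝ) ^ 2 * L ^ 2) ≤ 16 - d (n + 1) / d n) :
    AsympEquiv (fun n => (sInf {k : ℕ | d (k + 1) / d k > 16 - 1 / (n : ℝ)} : ℕ))
      (fun n => (n : ℝ) ^ ((3 : ℝ) / 2)) := by
  have hM0 : (1 : ℝ) ≤ M := by exact_mod_cast hM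
  have hmem : ∀ n : ℕ, 1 ≤ n → ∃ L : ℕ, L ≤ √(max C 0) * √n + 1 ∧
      L ^ 3 ∈ {k : ℕ | d (k + 1) / d k > 16 - 1 / (n : ℝ)} := by
    intro n hn
    have hn0 : (0 : ℝ) < n := by exact_mod_cast hn
    refine ⟨⌊√(max C 0) * √n⌋₊ + 1, ?_, ?_⟩
    · push_cast
      gcongr
      exact Nat.floor_le (by positivity)
    · set L := ⌊√(max C 0) * √n⌋₊ + 1 with hL
      have h1 : √(max C 0) * √n < L := by rw [hL]; push_cast; exact Nat.lt_floor_add_one _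
      have h2 : C * n < (L : ℝ) ^ 2 := by
        calc C * n ≤ max C 0 * n := by gcongr; exact le_max_left _ _
          _ = (√(max C 0) * √n) ^ 2 := by
            rw [mul_pow, sq_sqrt (le_max_right _ _), sq_sqrt hn0.le]
          _ < _ := by gcongr
      have hL0 : (0 : ℝ) < L := by rw [hL]; positivity
      have h3 : C / (L : ℝ) ^ 2 < 1 / n := by
        rw [div_lt_div_iff₀ (by positivity) hn0]; linarith
      have h4 := hup L (by omega)
      simp only [Set.mem_ofPred_eq]
      linarith
  constructor
  · refine ⟨(√(max C 0) + 1) ^ 3, 1, by positivity, one_pos, ?_⟩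
    filter_upwards [eventually_ge_atTop 1] with n hn
    obtain ⟨L, hL, hLmem⟩ := hmem n hn
    have hn1 : (1 : ℝ) ≤ n := by exact_mod_cast hn
    have hsq : 1 ≤ √(n : ℝ) := by rwa [one_le_sqrt]
    rw [one_mul, Nat.ceil_natCast, three_halves_rpow, ← mul_pow]
    have h1 : ((sInf {k : ℕ | d (k + 1) / d k > 16 - 1 / (n : ℝ)} : ℕ) : ℝ) ≤ (L : ℝ) ^ 3 := by
      exact_mod_cast Nat.sInf_le hLmem
    refine h1.trans ?_
    gcongr
    linarith
  · refine ⟨(3 * M) ^ 3, 1, by positivity, one_pos, ?_⟩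
    filter_upwards [eventually_ge_atTop (2 * M ^ 2)] with n hn
    have hn1 : 1 ≤ n := by nlinarith
    have hn0 : (0 : ℝ) < n := by exact_mod_cast hn1
    rw [one_mul, Nat.ceil_natCast, three_halves_rpow]
    obtain ⟨L₀, -, hL₀⟩ := hmem n hn1
    have hk := Nat.sInf_mem (⟨_, hL₀⟩ : Set.Nonempty {k : ℕ | d (k + 1) / d k > 16 - 1 / (n : ℝ)})
    set k := sInf {k : ℕ | d (k + 1) / d k > 16 - 1 / (n : ℝ)}
    simp only [Set.mem_ofPred_eq] at hk
    -- `L` is the largest integer with `2 M² L² ≤ n`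
    set y : ℝ := √(n / (2 * M ^ 2)) with hy
    have hnM : (2 * (M : ℝ) ^ 2) ≤ n := by exact_mod_cast hn
    have hy1 : 1 ≤ y := by
      rw [hy, one_le_sqrt, one_le_div (by positivity)]; exact hnM
    have hysq : 2 * (M : ℝ) ^ 2 * y ^ 2 = n := by
      rw [hy, sq_sqrt (by positivity)]; field_simp
    set L := ⌊y⌋₊ with hL
    have hL1 : 1 ≤ L := Nat.one_le_floor_iff y |>.2 hy1
    have hL1' : (1 : ℝ) ≤ L := by exact_mod_cast hL1
    have hLy : (L : ℝ) ≤ y := Nat.floor_le (by positivity)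
    have hyL : y < L + 1 := Nat.lt_floor_add_one y
    have hkL : L ^ 3 < k := by
      by_contra h
      have h1 := hlow L k hL1 (by omega)
      have h2 : 1 / (n : ℝ) ≤ 1 / (2 * (M : ℝ) ^ 2 * L ^ 2) := by
        rw [← hysq]; gcongr
      linarith
    have h5 : √(n : ℝ) ≤ 3 * M * L := by
      rw [sqrt_le_left (by positivity), ← hysq]
      have : y ≤ 2 * L := by linarith
      calc 2 * (M : ℝ) ^ 2 * y ^ 2 ≤ 2 * (M : ℝ) ^ 2 * (2 * L) ^ 2 := by gcongr
        _ ≤ (3 * (M : ℝ) * L) ^ 2 := by nlinarith [sq_nonneg ((M : ℝ) * L)]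
    calc √(n : ℝ) ^ 3 ≤ (3 * M * L) ^ 3 := by gcongr
      _ = (3 * M) ^ 3 * ((L ^ 3 : ℕ) : ℝ) := by push_cast; ring
      _ ≤ _ := by gcongr

/-- Subexponential decay of the return probability along even times gives the rate `4`. -/
lemma limsup_root_eq_four {c : ℕ → ℝ} (h0 : ∀ n, 0 ≤ c n) (hup : ∀ n, c n ≤ 4 ^ n) {C : ℝ}
    (hlow : ∀ L : ℕ, 1 ≤ L → 16 ^ (L ^ 3) * exp (-(C * L)) ≤ c (2 * L ^ 3)) :
    limsup (fun n : ℕ => c n ^ ((n : ℝ)⁻¹)) atTop = 4 := by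
  have hle : ∀ n : ℕ, c n ^ ((n : ℝ)⁻¹) ≤ 4 := by
    intro n
    rcases Nat.eq_zero_or_pos n with rfl | hn
    · simp
    · calc c n ^ ((n : ℝ)⁻¹) ≤ ((4 : ℝ) ^ n) ^ ((n : ℝ)⁻¹) :=
          rpow_le_rpow (h0 n) (hup n) (by positivity)
        _ = 4 := pow_rpow_inv_natCast (by norm_num) hn.ne'
  have hge0 : ∀ n : ℕ, 0 ≤ c n ^ ((n : ℝ)⁻¹) := fun n => rpow_nonneg (h0 n) _
  have hbdd : IsBoundedUnder (· ≤ ·) atTop fun n : ℕ => c n ^ ((n : ℝ)⁻¹) :=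
    isBoundedUnder_of ⟨4, hle⟩
  have hcobdd : IsCoboundedUnder (· ≤ ·) atTop fun n : ℕ => c n ^ ((n : ℝ)⁻¹) :=
    (isBoundedUnder_of ⟨0, hge0⟩ : IsBoundedUnder (· ≥ ·) atTop _).isCoboundedUnder_le
  apply le_antisymm
  · exact limsup_le_of_le hcobdd (Eventually.of_forall hle)
  · refine le_of_forall_lt fun b hb => ?_
    obtain ⟨b', hbb', hb'⟩ := exists_between hb
    refine hbb'.trans_le (le_limsup_of_frequently_le ?_ hbdd)
    have hsub : ∀ L : ℕ, 1 ≤ L →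
        4 * exp (-(C / 2) * ((L : ℝ)⁻¹) ^ 2) ≤ c (2 * L ^ 3) ^ (((2 * L ^ 3 : ℕ) : ℝ)⁻¹) := by
      intro L hL
      have hL0 : (0 : ℝ) < L := by exact_mod_cast hL
      have e : (4 * exp (-(C / 2) * ((L : ℝ)⁻¹) ^ 2)) ^ (2 * L ^ 3) =
          16 ^ (L ^ 3) * exp (-(C * L)) := by
        rw [mul_pow, ← exp_nat_mul, pow_mul]
        norm_num
        field_simp
      rw [← pow_rpow_inv_natCast (n := 2 * L ^ 3)
        (show 0 ≤ 4 * exp (-(C / 2) * ((L : ℝ)⁻¹) ^ 2) by positivity) (by positivity), e]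
      exact rpow_le_rpow (by positivity) (hlow L hL) (by positivity)
    have hlim : Tendsto (fun L : ℕ => 4 * exp (-(C / 2) * ((L : ℝ)⁻¹) ^ 2)) atTop (𝓝 4) := by
      have h1 : Tendsto (fun L : ℕ => ((L : ℝ)⁻¹)) atTop (𝓝 0) :=
        tendsto_inv_atTop_nhds_zero_nat
      have h2 := (((h1.pow 2).const_mul (-(C / 2))).rexp).const_mul 4
      simpa using h2
    have hev : ∀ᶠ L : ℕ in atTop, b' ≤ c (2 * L ^ 3) ^ (((2 * L ^ 3 : ℕ) : ℝ)⁻¹) := by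
      filter_upwards [hlim.eventually_const_lt hb', eventually_ge_atTop 1] with L h1 h2
      exact h1.le.trans (hsub L h2)
    have ht : Tendsto (fun L : ℕ => 2 * L ^ 3) atTop atTop :=
      tendsto_atTop_mono (fun L => by
        have := Nat.le_self_pow (n := 3) (by norm_num) L
        simp only [id]; omega)
        tendsto_id
    exact ht.frequently hev.frequently

end Asymptotics

/-- For the Baumslag–Solitar group `BS(1,N)` (`N ≥ 2`) with symmetric generating set
`S = {a, a⁻¹, t, t⁻¹}`, the function `R′` satisfies `R′(n) ∼ n^{3/2}`. -/
theorem Rprime_BS_asymp (N : ℕ) (hN : 2 ≤ N) :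
    AsympEquiv
      (fun n : ℕ =>
        (Rprime (PresentedGroup (BSrels N))
          ({PresentedGroup.of 0, (PresentedGroup.of 0)⁻¹,
            PresentedGroup.of 1, (PresentedGroup.of 1)⁻¹} :
              Set (PresentedGroup (BSrels N))) n : ℝ))
      (fun n : ℕ => (n : ℝ) ^ ((3 : ℝ) / 2)) := by
  have hN0 : (N : ℚ) ≠ 0 := by positivity
  have hS : ({PresentedGroup.of 0, (PresentedGroup.of 0)⁻¹, PresentedGroup.of 1,
      (PresentedGroup.of 1)⁻¹} : Set (PresentedGroup (BSrels N))) = (bsGen N : Set (BS N)) := by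
    simp [bsGen]
  have hT := bsGen_inv (N := N)
  have hcard : (#(bsGen N) : ℝ) = 4 := by rw [bsGen_card hN0]; norm_num
  set d : ℕ → ℝ := fun k => walkCount (bsGen N) (2 * k) 1 with hd
  have hlow : ∀ L n : ℕ, 1 ≤ L → n ≤ L ^ 3 →
      16 ^ n * Real.exp (-((11 + 2 * N) * L)) ≤ d n := fun L n hL hn => bs_lower_exp hN L n hL hn
  have hpos : ∀ k, 0 < d k := fun k =>
    lt_of_lt_of_le (by positivity) (hlow (k + 1) k (by omega)
      ((Nat.le_succ k).trans (Nat.le_self_pow (by norm_num) _)))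
  have hd0 : d 0 = 1 := by simp [hd, walkCount]
  have hup : ∀ n, walkCount (bsGen N) n 1 ≤ 4 ^ n := fun n => by
    rw [← hcard, ← walkCount_tsum]
    exact (summable_of_finite (walkCount_finite_support _ n)).le_tsum 1
      fun x _ => walkCount_nonneg _ _ _
  have hmono := ratio_monotone hpos (walkCount_logConvex hT)
  have hdecay : ∀ n r : ℕ, 2 * 16 ^ n ≤ 2 ^ r * d n →
      d n ≤ r ^ 2 * (2 * (16 * d n - d (n + 1))) := by
    intro n r hr
    have h := walkCount_decay hT (freePair N) (fun b => by
      cases b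
      · exact ⟨genT N, by simp [bsGen], genT N, by simp [bsGen], rfl⟩
      · exact ⟨genA N, by simp [bsGen], genT N, by simp [bsGen], rfl⟩)
      (fun r w w' h => by
        have h' := freePair_injective hN0 hN (List.ofFn w) (List.ofFn w') (by simp)
          (by simpa [List.map_ofFn, Function.comp_def] using h)
        exact List.ofFn_injective h') n r
    rw [hcard, ← pow_mul, mul_comm n 2, pow_mul] at h
    norm_num at h
    exact h hr
  obtain ⟨M, hM, hgap⟩ := gap_lower hpos hlow hdecay
  have hrate : cogrowthRate (BS N) (bsGen N : Set (BS N)) = 4 := by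
    unfold cogrowthRate
    simp_rw [cogrowth_eq]
    exact limsup_root_eq_four (fun n => walkCount_nonneg _ _ _) hup
      fun L hL => hlow L (L ^ 3) hL le_rfl
  have hmain := asympEquiv_sInf (gap_upper hd0 hpos hmono hlow) hM hgap
  rw [hS]
  have e : ∀ n : ℕ, Rprime (BS N) (bsGen N : Set (BS N)) n =
      sInf {k : ℕ | d (k + 1) / d k > 16 - 1 / (n : ℝ)} := by
    intro n
    unfold Rprime
    rw [hrate]
    simp_rw [cogrowth_eq]
    norm_num [hd, mul_add]
  simp_rw [e]
  exact hmain
end
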